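/- Define g_{1,6}(τ) = g_{(3/6,0)}(6τ)³ · g_{(1/6,0)}(6τ)⁻³ for τ ∈ ℍ. Then the ring O_{1,6}(ℚ) of weakly holomorphic modular functions for Γ₁(6) with rational Fourier coefficients equals ℚ[g_{1,6}, g_{1,6}⁻¹, (g_{1,6} − 8)⁻¹, (g_{1,6} + 1)⁻¹]; that is, these four functions lie in O_{1,6}(ℚ), and every element of O_{1,6}(ℚ) is a polynomial in them with rational coefficients. -/

import Mathlib

open Complex UpperHalfPlane Matrix MatrixGroups CongruenceSubgroup
open scoped UpperHalfPlane Manifold Real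

noncomputable section

/-- `N·τ` as a point of the upper half-plane (junk value `τ` if `N = 0`). -/
def hsmul (N : ℕ) (τ : UpperHalfPlane) : UpperHalfPlane :=
  if hN : 0 < N then
    ⟨(N : ℂ) * τ, by
      have h0 : (0 : ℝ) < (N : ℝ) := by exact_mod_cast hN
      simpa [Complex.mul_im] using mul_pos h0 τ.2⟩
  else τ

/-- The Siegel function `g_r(τ)` given by its infinite product expansion. -/
def siegel (r : ℚ × ℚ) (τ : ℍ) : ℂ :=
  -Complex.exp ((Real.pi : ℂ) * Complex.I * (((r.1 : ℂ) ^ 2 - (r.1 : ℂ) + 1 / 6) * τ)) *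
    Complex.exp ((Real.pi : ℂ) * Complex.I * (r.2 : ℂ) * ((r.1 : ℂ) - 1)) *
    (1 - Complex.exp (2 * (Real.pi : ℂ) * Complex.I * ((r.1 : ℂ) * τ + (r.2 : ℂ)))) *
    ∏' n : ℕ,
      ((1 - Complex.exp (2 * (Real.pi : ℂ) * Complex.I *
          (((n : ℂ) + 1 + (r.1 : ℂ)) * τ + (r.2 : ℂ)))) *
       (1 - Complex.exp (2 * (Real.pi : ℂ) * Complex.I *
          (((n : ℂ) + 1 - (r.1 : ℂ)) * τ - (r.2 : ℂ)))))

/-- The lattice point `ω = m·τ + n` attached to a pair `(m,n) ∈ ℤ²`. -/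
def lat (τ : ℍ) (p : ℤ × ℤ) : ℂ := (p.1 : ℂ) * τ + (p.2 : ℂ)

/-- `g₂(τ) = 60 ∑_{ω ∈ L_τ ∖ {0}} ω⁻⁴`. -/
def g2C (τ : ℍ) : ℂ := 60 * ∑' p : {p : ℤ × ℤ // p ≠ 0}, ((lat τ p.1) ^ 4)⁻¹

/-- `g₃(τ) = 140 ∑_{ω ∈ L_τ ∖ {0}} ω⁻⁶`. -/
def g3C (τ : ℍ) : ℂ := 140 * ∑' p : {p : ℤ × ℤ // p ≠ 0}, ((lat τ p.1) ^ 6)⁻¹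

/-- The discriminant `Δ(τ) = g₂(τ)³ - 27 g₃(τ)²`. -/
def discC (τ : ℍ) : ℂ := g2C τ ^ 3 - 27 * g3C τ ^ 2

/-- The Weierstrass `℘`-function relative to the lattice `L_τ = ℤτ + ℤ`. -/
def wpC (z : ℂ) (τ : ℍ) : ℂ :=
  (z ^ 2)⁻¹ + ∑' p : {p : ℤ × ℤ // p ≠ 0}, (((z - lat τ p.1) ^ 2)⁻¹ - ((lat τ p.1) ^ 2)⁻¹)

/-- The Fricke function `f_r(τ)`. -/
def fricke (r : ℚ × ℚ) (τ : ℍ) : ℂ :=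
  -(2 ^ 7 * 3 ^ 5) * (g2C τ * g3C τ / discC τ) * wpC ((r.1 : ℂ) * τ + (r.2 : ℂ)) τ

/-- The elliptic modular `j`-invariant. -/
def jinv (τ : ℍ) : ℂ := 1728 * g2C τ ^ 3 / discC τ

/-- The Dedekind eta function. -/
def etaC (τ : ℍ) : ℂ :=
  (Real.sqrt (2 * Real.pi) : ℂ) * Complex.exp (2 * (Real.pi : ℂ) * Complex.I / 16) *
    Complex.exp (2 * (Real.pi : ℂ) * Complex.I * τ / 24) *
    ∏' n : ℕ, (1 - Complex.exp (2 * (Real.pi : ℂ) * Complex.I * ((n : ℂ) + 1) * τ))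

/-- `r ∈ ℚ² ∖ ℤ²`. -/
def NonIntegral (r : ℚ × ℚ) : Prop := ¬ ∃ a b : ℤ, r = ((a : ℚ), (b : ℚ))

/-- `r ∈ (1/N)ℤ²`. -/
def InDen (N : ℕ) (r : ℚ × ℚ) : Prop := ∃ a b : ℤ, r = ((a : ℚ) / N, (b : ℚ) / N)

/-- Membership in `Γ^1(N)`: `a ≡ d ≡ 1` and `b ≡ 0 (mod N)`. -/
def GammaUpper (N : ℕ) (γ : SL(2, ℤ)) : Prop :=
  ((γ 0 0 : ℤ) : ZMod N) = 1 ∧ ((γ 1 1 : ℤ) : ZMod N) = 1 ∧ ((γ 0 1 : ℤ) : ZMod N) = 0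

/-- The transpose action `ᵗγ r = (a r₁ + c r₂, b r₁ + d r₂)` of `γ = [[a,b],[c,d]]`. -/
def tAct (γ : SL(2, ℤ)) (r : ℚ × ℚ) : ℚ × ℚ :=
  ((γ 0 0 : ℚ) * r.1 + (γ 1 0 : ℚ) * r.2, (γ 0 1 : ℚ) * r.1 + (γ 1 1 : ℚ) * r.2)

/-- The power `q^{n/d} = e^{2πi(n/d)τ}`. -/
def qpow (d : ℕ) (n : ℤ) (τ : ℍ) : ℂ :=
  Complex.exp (2 * (Real.pi : ℂ) * Complex.I * ((n : ℂ) / (d : ℂ)) * τ)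

/-- `h` is a weakly holomorphic modular function for `Γ₁(N)` with rational
Fourier coefficients: holomorphic on `ℍ`, `Γ₁(N)`-invariant, with a convergent
`q`-expansion at `i∞` having rational coefficients, and meromorphic at every cusp. -/
def IsWeaklyHolo1 (N : ℕ) (h : ℍ → ℂ) : Prop :=
  MDifferentiable 𝓘(ℂ) 𝓘(ℂ) h ∧
  (∀ γ ∈ Gamma1 N, ∀ τ : ℍ, h (γ • τ) = h τ) ∧
  (∃ n₀ : ℤ, ∃ c : ℕ → ℚ,
    ∀ τ : ℍ, HasSum (fun n : ℕ => (c n : ℂ) * qpow 1 (n₀ + n) τ) (h τ)) ∧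
  (∀ γ : SL(2, ℤ), ∃ n₀ : ℤ, ∃ c : ℕ → ℂ,
    ∀ τ : ℍ, HasSum (fun n : ℕ => c n * qpow N (n₀ + n) τ) (h (γ • τ)))

/-- `h` is a weakly holomorphic modular function for `Γ^1(N)` with rational
Fourier coefficients (the expansion at `i∞` being in powers of `q^{1/N}`). -/
def IsWeaklyHoloUp (N : ℕ) (h : ℍ → ℂ) : Prop :=
  MDifferentiable 𝓘(ℂ) 𝓘(ℂ) h ∧
  (∀ γ : SL(2, ℤ), GammaUpper N γ → ∀ τ : ℍ, h (γ • τ) = h τ) ∧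
  (∃ n₀ : ℤ, ∃ c : ℕ → ℚ,
    ∀ τ : ℍ, HasSum (fun n : ℕ => (c n : ℂ) * qpow N (n₀ + n) τ) (h τ)) ∧
  (∀ γ : SL(2, ℤ), ∃ n₀ : ℤ, ∃ c : ℕ → ℂ,
    ∀ τ : ℍ, HasSum (fun n : ℕ => c n * qpow N (n₀ + n) τ) (h (γ • τ)))

/-- The Weierstrass-unit generator
`f^1_{m,N} = (f_{(1/N,0)} - f_{(1/m,0)})/(f_{(2/m,0)} - f_{(1/m,0)})`. -/
def fUnit (m N : ℕ) (τ : ℍ) : ℂ :=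
  (fricke ((1 : ℚ) / N, 0) τ - fricke ((1 : ℚ) / m, 0) τ) /
    (fricke ((2 : ℚ) / m, 0) τ - fricke ((1 : ℚ) / m, 0) τ)

/-- `g_{1,6}(τ) = g_{(3/6,0)}(6τ)³ · g_{(1/6,0)}(6τ)⁻³`. -/
def gOne6 (τ : ℍ) : ℂ :=
  siegel ((3 : ℚ) / 6, 0) (hsmul 6 τ) ^ 3 * (siegel ((1 : ℚ) / 6, 0) (hsmul 6 τ) ^ 3)⁻¹

/-
The curve `X₁(6)` has genus zero and the four cusps `∞`, `1`, `1/2`, `1/3`. By the Jacobi triple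
product, Siegel functions are values of Jacobi's theta function, up to a factor that cancels in
quotients of two of them; the transformation law of the theta function then makes such quotients
modular and gives their leading terms at all cusps. In this way `g = g_{1,6}` is found to be
holomorphic on `ℍ` and invariant under `Γ₁(6)`, with `q g → 1` at `∞` and the limits `8`, `-1`, `0`
at `1`, `1/2`, `1/3`.

Let `f` be weakly holomorphic with rational coefficients. Multiplying `f` by powers of `g - 8`,
`g + 1` and `g` removes its poles at `1`, `1/2` and `1/3`. The product has a pole only at `∞`, and
subtracting rational multiples of powers of `g` removes this pole too, one order at a time. What
remains is bounded at all cusps, hence constant.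

It remains to invert `g`, `g + 1` and `g - 8`. The first is a Siegel quotient. So is the second,
since `g + 1` and the quotient `(g_{(2/6,0)} / g_{(1/6,0)})(6τ)⁴` have the same pole and the same
value at `1/3`. For the third, the image `w` of `g` under the Fricke involution satisfies
`(g - 8)(w - 8) = 72`, because each factor vanishes where the other has its pole.
-/

/-! ### The Jacobi triple product -/

section GaussianBinomials

open Finset

/-- The `q`-Pochhammer symbol `(q; q)ₙ`. -/
def qPochhammer {R : Type*} [CommRing R] (q : R) (n : ℕ) : R := ∏ k ∈ range n, (1 - q ^ (k + 1))

/-- The Gaussian binomial coefficient `[M, m]_q`, defined by a `q`-Pascal recurrence so that it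
makes sense over any commutative semiring. -/
def gaussBinom {R : Type*} [CommSemiring R] (q : R) : ℕ → ℕ → R
  | _, 0 => 1
  | 0, _ + 1 => 0
  | M + 1, m + 1 => gaussBinom q M m + q ^ (m + 1) * gaussBinom q M (m + 1)

@[simp]
lemma gaussBinom_zero_right {R : Type*} [CommSemiring R] (q : R) (M : ℕ) :
    gaussBinom q M 0 = 1 := by
  cases M <;> rfl

lemma gaussBinom_eq_zero_of_lt {R : Type*} [CommSemiring R] (q : R) {M m : ℕ} (h : M < m) :
    gaussBinom q M m = 0 := by
  induction M generalizing m with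
  | zero => cases m with
    | zero => omega
    | succ m => rfl
  | succ M ih => cases m with
    | zero => omega
    | succ m => rw [gaussBinom, ih (by omega), ih (by omega), mul_zero, add_zero]

lemma qPochhammer_succ {R : Type*} [CommRing R] (q : R) (n : ℕ) :
    qPochhammer q (n + 1) = qPochhammer q n * (1 - q ^ (n + 1)) :=
  prod_range_succ _ _

lemma qPochhammer_mul_qPochhammer_mul_gaussBinom {R : Type*} [CommRing R] (q : R) (m n : ℕ) :
    qPochhammer q m * qPochhammer q n * gaussBinom q (m + n) m = qPochhammer q (m + n) := by
  induction m generalizing n with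
  | zero => simp [qPochhammer]
  | succ m ihm =>
    induction n with
    | zero =>
      have h := ihm 0
      simp only [add_zero] at h ⊢
      rw [gaussBinom, gaussBinom_eq_zero_of_lt q (Nat.lt_succ_self m), qPochhammer_succ]
      linear_combination (1 - q ^ (m + 1)) * h
    | succ n ihn =>
      have h := ihm (n + 1)
      rw [show m + 1 + (n + 1) = m + (n + 1) + 1 by ring, gaussBinom, qPochhammer_succ q m,
        qPochhammer_succ q (m + (n + 1))]
      rw [show m + 1 + n = m + (n + 1) by ring, qPochhammer_succ q m] at ihn
      rw [qPochhammer_succ q n] at h ⊢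
      linear_combination (1 - q ^ (m + 1)) * h + q ^ (m + 1) * (1 - q ^ (n + 1)) * ihn

theorem prod_one_add_mul_pow_eq_sum_gaussBinom {R : Type*} [CommSemiring R] (q x : R) (M : ℕ) :
    ∏ k ∈ range M, (1 + x * q ^ k) =
      ∑ m ∈ range (M + 1), q ^ m.choose 2 * gaussBinom q M m * x ^ m := by
  induction M generalizing x with
  | zero => simp
  | succ M ih =>
    have hshift : ∏ k ∈ range M, (1 + x * q ^ (k + 1)) =
        ∑ m ∈ range (M + 1), q ^ m.choose 2 * gaussBinom q M m * (x * q) ^ m := by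
      rw [← ih (x * q)]
      exact prod_congr rfl fun k _ => by ring
    have hpascal : ∀ m, q ^ (m + 1).choose 2 * gaussBinom q (M + 1) (m + 1) * x ^ (m + 1) =
        x * (q ^ m.choose 2 * gaussBinom q M m * (x * q) ^ m) +
          q ^ (m + 1).choose 2 * gaussBinom q M (m + 1) * (x * q) ^ (m + 1) := fun m => by
      rw [gaussBinom, show (m + 1).choose 2 = m + m.choose 2 by simp [Nat.choose_succ_succ' m 1]]
      ring
    rw [prod_range_succ', hshift, sum_range_succ' _ (M + 1)]
    simp only [hpascal]
    rw [sum_add_distrib, ← mul_sum, sum_range_succ (fun m => q ^ (m + 1).choose 2 * _ * _) M,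
      gaussBinom_eq_zero_of_lt q (Nat.lt_succ_self M),
      sum_range_succ' (fun m => q ^ m.choose 2 * gaussBinom q M m * (x * q) ^ m) M]
    simp only [Nat.choose_zero_succ, pow_zero, gaussBinom_zero_right]
    ring

/-- The Gaussian binomial coefficient `[2N, N + j]_q`, extended by zero to all integers `j`. -/
def centralGaussBinom {R : Type*} [CommSemiring R] (q : R) (N : ℕ) (j : ℤ) : R :=
  if -(N : ℤ) ≤ j then gaussBinom q (2 * N) (N + j).toNat else 0

lemma tsum_mul_centralGaussBinom {R : Type*} [CommSemiring R] [TopologicalSpace R] (q : R) (N : ℕ)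
    (a : ℤ → R) :
    ∑' j, a j * centralGaussBinom q N j =
      ∑ m ∈ range (2 * N + 1), a ((m : ℤ) - N) * gaussBinom q (2 * N) m := by
  have hinj : Function.Injective fun m : ℕ => (m : ℤ) - N := fun a b h => by simpa using h
  rw [tsum_eq_sum (s := (range (2 * N + 1)).map ⟨_, hinj⟩), sum_map]
  · exact sum_congr rfl fun m _ => by simp [centralGaussBinom]
  · intro j hj
    rw [centralGaussBinom]
    split_ifs with h
    · rw [gaussBinom_eq_zero_of_lt, mul_zero]
      by_contra hle
      exact hj (mem_map.mpr ⟨(N + j).toNat, mem_range.mpr (by omega),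
        by simp only [Function.Embedding.coeFn_mk]; omega⟩)
    · exact mul_zero _

lemma prod_range_two_mul_one_sub {K : Type*} [Field K] {p x : K} (hp : p ≠ 0) (hx : x ≠ 0)
    (N : ℕ) :
    ∏ k ∈ range (2 * N), (1 - x * p ^ (-(2 * N : ℤ)) * (p ^ 2) ^ k) =
      (-x) ^ N * p ^ (-(N * (N + 1) : ℤ)) *
        ∏ k ∈ range N, ((1 - x * (p ^ 2) ^ k) * (1 - (p ^ 2) ^ (k + 1) / x)) := by
  have hupper : ∀ k, 1 - x * p ^ (-(2 * N : ℤ)) * (p ^ 2) ^ (N + k) = 1 - x * (p ^ 2) ^ k := by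
    intro k
    rw [mul_assoc, pow_add, ← pow_mul p 2 N, _root_.zpow_neg, ← zpow_natCast p (2 * N)]
    push_cast
    rw [inv_mul_cancel_left₀ (zpow_ne_zero _ hp)]
  have hlower : ∀ k ∈ range N, 1 - x * p ^ (-(2 * N : ℤ)) * (p ^ 2) ^ (N - 1 - k) =
      -x * ((p ^ 2) ^ (k + 1))⁻¹ * (1 - (p ^ 2) ^ (k + 1) / x) := by
    intro k hk
    have hsplit : p ^ (2 * N : ℤ) = (p ^ 2) ^ (N - 1 - k) * (p ^ 2) ^ (k + 1) := by
      rw [← pow_add, ← pow_mul, ← zpow_natCast]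
      congr 1
      have := mem_range.mp hk
      omega
    rw [_root_.zpow_neg, hsplit]
    field_simp
    ring
  have hgauss : ∏ k ∈ range N, (p ^ 2) ^ (k + 1) = p ^ (N * (N + 1) : ℤ) := by
    have htriangle : (∑ k ∈ range N, (k + 1)) * 2 = (N + 1) * N := by
      simpa [sum_range_succ'] using sum_range_id_mul_two (N + 1)
    rw [prod_pow_eq_pow_sum, ← pow_mul, mul_comm 2, htriangle, ← zpow_natCast, mul_comm (N + 1)]
    push_cast
    rfl
  rw [two_mul N, prod_range_add, prod_congr rfl fun k _ => hupper k, ← prod_range_reflect _ N,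
    prod_congr rfl hlower, prod_mul_distrib, prod_mul_distrib, prod_mul_distrib, prod_const,
    card_range, prod_inv_distrib, hgauss, _root_.zpow_neg]
  ring

theorem finite_triple_product {K : Type*} [Field K] [TopologicalSpace K] {p x : K} (hp : p ≠ 0)
    (hx : x ≠ 0) (N : ℕ) :
    ∏ k ∈ range N, ((1 - x * (p ^ 2) ^ k) * (1 - (p ^ 2) ^ (k + 1) / x)) =
      ∑' j : ℤ, (-1) ^ j * p ^ (j * (j - 1)) * x ^ j * centralGaussBinom (p ^ 2) N j := by
  have hfactor : (-x) ^ N * p ^ (-(N * (N + 1) : ℤ)) ≠ 0 :=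
    mul_ne_zero (pow_ne_zero _ (neg_ne_zero.mpr hx)) (zpow_ne_zero _ hp)
  have hterm : ∀ m : ℕ, (p ^ 2) ^ m.choose 2 * (-(x * p ^ (-(2 * N : ℤ)))) ^ m =
      (-x) ^ N * p ^ (-(N * (N + 1) : ℤ)) * ((-1) ^ ((m : ℤ) - N) *
        p ^ (((m : ℤ) - N) * ((m : ℤ) - N - 1)) * x ^ ((m : ℤ) - N)) := by
    intro m
    have hchoose : (p ^ 2) ^ m.choose 2 = p ^ ((m : ℤ) * (m - 1)) := by
      rw [← pow_mul, mul_comm, Nat.choose_two_right, Nat.div_mul_cancel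
        (Nat.even_mul_pred_self m).two_dvd, ← zpow_natCast]
      cases m <;> simp
    have hexp : p ^ ((m : ℤ) * (m - 1)) * (p ^ (-(2 * N : ℤ))) ^ m =
        p ^ (-(N * (N + 1) : ℤ)) * p ^ (((m : ℤ) - N) * ((m : ℤ) - N - 1)) := by
      rw [← zpow_natCast (p ^ (-(2 * N : ℤ))) m, ← _root_.zpow_mul, ← zpow_add₀ hp, ← zpow_add₀ hp]
      ring_nf
    have hx' : (-x) ^ m = (-x) ^ N * ((-1) ^ ((m : ℤ) - N) * x ^ ((m : ℤ) - N)) := by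
      rw [← mul_zpow, neg_one_mul, ← zpow_natCast (-x) N, ← zpow_natCast (-x) m,
        ← zpow_add₀ (neg_ne_zero.mpr hx)]
      ring_nf
    rw [← neg_mul, mul_pow, hx', hchoose]
    linear_combination (-x) ^ N * ((-1) ^ ((m : ℤ) - N) * x ^ ((m : ℤ) - N)) * hexp
  rw [tsum_mul_centralGaussBinom]
  apply mul_left_cancel₀ hfactor
  rw [← prod_range_two_mul_one_sub hp hx, mul_sum]
  simp only [sub_eq_add_neg (1 : K), ← neg_mul (x * _)]
  rw [prod_one_add_mul_pow_eq_sum_gaussBinom]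
  exact sum_congr rfl fun m _ => by linear_combination gaussBinom (p ^ 2) (2 * N) m * hterm m

end GaussianBinomials

section TripleProduct

open Filter Topology

lemma one_sub_pow_succ_ne_zero {q : ℂ} (hq : ‖q‖ < 1) (k : ℕ) : 1 - q ^ (k + 1) ≠ 0 := by
  intro h
  have hnorm : ‖q ^ (k + 1)‖ = 1 := by rw [← sub_eq_zero.mp h, norm_one]
  rw [norm_pow] at hnorm
  exact (pow_lt_one₀ (norm_nonneg q) hq k.succ_ne_zero).ne hnorm

lemma qPochhammer_ne_zero {q : ℂ} (hq : ‖q‖ < 1) (n : ℕ) : qPochhammer q n ≠ 0 :=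
  Finset.prod_ne_zero_iff.mpr fun k _ => one_sub_pow_succ_ne_zero hq k

lemma tendsto_qPochhammer {q : ℂ} (hq : ‖q‖ < 1) :
    Tendsto (qPochhammer q) atTop (𝓝 (∏' n : ℕ, (1 - q ^ (n + 1)))) :=
  (ModularForm.multipliable_one_sub_pow hq).hasProd.tendsto_prod_nat

lemma tprod_one_sub_pow_succ_ne_zero {q : ℂ} (hq : ‖q‖ < 1) : ∏' n : ℕ, (1 - q ^ (n + 1)) ≠ 0 := by
  simpa only [← sub_eq_add_neg] using
    tprod_one_add_ne_zero_of_summable (f := fun n : ℕ => -q ^ (n + 1))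
      (fun n => by simpa only [← sub_eq_add_neg] using one_sub_pow_succ_ne_zero hq n)
      (by simpa only [norm_neg, norm_pow] using
        (summable_nat_add_iff 1).mpr (summable_geometric_of_lt_one (norm_nonneg q) hq))

lemma gaussBinom_add_eq_div {q : ℂ} (hq : ‖q‖ < 1) (m n : ℕ) :
    gaussBinom q (m + n) m = qPochhammer q (m + n) / (qPochhammer q m * qPochhammer q n) := by
  rw [eq_div_iff (mul_ne_zero (qPochhammer_ne_zero hq m) (qPochhammer_ne_zero hq n)), mul_comm,
    qPochhammer_mul_qPochhammer_mul_gaussBinom]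

lemma tendsto_centralGaussBinom {q : ℂ} (hq : ‖q‖ < 1) (j : ℤ) :
    Tendsto (fun N => centralGaussBinom q N j) atTop (𝓝 (∏' n : ℕ, (1 - q ^ (n + 1)))⁻¹) := by
  set Q := ∏' n : ℕ, (1 - q ^ (n + 1))
  have hQ0 : Q ≠ 0 := tprod_one_sub_pow_succ_ne_zero hq
  have htop : ∀ i : ℤ, Tendsto (fun N : ℕ => (N + i).toNat) atTop atTop := fun i =>
    tendsto_atTop_atTop.mpr fun b => ⟨b + i.natAbs, fun a ha => by omega⟩
  have hlim : Tendsto (fun N : ℕ => qPochhammer q ((N + j).toNat + (N + -j).toNat) /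
      (qPochhammer q (N + j).toNat * qPochhammer q (N + -j).toNat)) atTop (𝓝 (Q / (Q * Q))) :=
    have hq := tendsto_qPochhammer hq
    (hq.comp ((htop j).atTop_add_atTop (htop (-j)))).div
      ((hq.comp (htop j)).mul (hq.comp (htop (-j)))) (mul_ne_zero hQ0 hQ0)
  rw [div_self_mul_self'] at hlim
  refine hlim.congr' ?_
  filter_upwards [eventually_ge_atTop j.natAbs] with N hN
  rw [centralGaussBinom, if_pos (by omega),
    show 2 * N = (N + j).toNat + (N + -j).toNat by omega, gaussBinom_add_eq_div hq]

lemma exists_norm_centralGaussBinom_le {q : ℂ} (hq : ‖q‖ < 1) :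
    ∃ B : ℝ, ∀ N j, ‖centralGaussBinom q N j‖ ≤ B := by
  have hlim := tendsto_qPochhammer hq
  obtain ⟨A, hA⟩ := (Metric.isBounded_range_of_tendsto _ hlim).exists_norm_le
  obtain ⟨A', hA'⟩ := (Metric.isBounded_range_of_tendsto _
    (hlim.inv₀ (tprod_one_sub_pow_succ_ne_zero hq))).exists_norm_le
  rw [Set.forall_mem_range] at hA hA'
  have hA0 : 0 ≤ A := (norm_nonneg _).trans (hA 0)
  have hA0' : 0 ≤ A' := (norm_nonneg _).trans (hA' 0)
  have hB : 0 ≤ A * (A' * A') := by positivity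
  refine ⟨A * (A' * A'), fun N j => ?_⟩
  rw [centralGaussBinom]
  split_ifs with h
  · rcases lt_or_ge (2 * N) (N + j).toNat with hlt | hge
    · rwa [gaussBinom_eq_zero_of_lt q hlt, norm_zero]
    · obtain ⟨n, hn⟩ := Nat.exists_eq_add_of_le hge
      rw [hn, gaussBinom_add_eq_div hq, div_eq_mul_inv, mul_inv, norm_mul, norm_mul]
      exact mul_le_mul (hA _) (mul_le_mul (hA' _) (hA' _) (norm_nonneg _) hA0') (by positivity) hA0
  · rwa [norm_zero]

/-- The theta series `∑ⱼ (-1)ʲ e^{πi j(j-1)τ} e^{2πi jz}`, with zeros exactly at the lattice points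
`z ∈ ℤτ + ℤ`, written through Mathlib's two-variable theta function. -/
def shiftedTheta (z : ℂ) (τ : ℍ) : ℂ := jacobiTheta₂ (z + 1 / 2 - τ / 2) τ

lemma hasSum_shiftedTheta (z : ℂ) (τ : ℍ) :
    HasSum (fun j : ℤ => (-1) ^ j * cexp (π * Complex.I * τ) ^ (j * (j - 1)) *
      cexp (2 * π * Complex.I * z) ^ j) (shiftedTheta z τ) := by
  convert hasSum_jacobiTheta₂_term (z + 1 / 2 - τ / 2) τ.im_pos using 2 with j
  · rw [jacobiTheta₂_term, ← Complex.exp_pi_mul_I]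
    simp only [← Complex.exp_int_mul, ← Complex.exp_add]
    congr 1
    push_cast
    ring
  · rfl

/-- The infinite product part of a Siegel function. -/
def thetaProd (z : ℂ) (τ : ℍ) : ℂ :=
  (1 - cexp (2 * π * Complex.I * z)) *
    ∏' n : ℕ, ((1 - cexp (2 * π * Complex.I * ((n + 1) * τ + z))) *
      (1 - cexp (2 * π * Complex.I * ((n + 1) * τ - z))))

lemma norm_exp_pi_mul_I_lt_one (τ : ℍ) : ‖cexp (π * Complex.I * τ)‖ < 1 := by
  rw [Complex.norm_exp, Real.exp_lt_one_iff]
  simpa using mul_pos Real.pi_pos τ.im_pos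

lemma norm_exp_two_pi_mul_I_lt_one (τ : ℍ) : ‖cexp (π * Complex.I * τ) ^ 2‖ < 1 := by
  rw [norm_pow]
  exact pow_lt_one₀ (norm_nonneg _) (norm_exp_pi_mul_I_lt_one τ) two_ne_zero

lemma exp_lattice_add (z : ℂ) (τ : ℍ) (n : ℕ) :
    cexp (2 * π * Complex.I * (n * τ + z)) =
      cexp (2 * π * Complex.I * z) * (cexp (π * Complex.I * τ) ^ 2) ^ n := by
  simp only [← Complex.exp_nat_mul, ← Complex.exp_add]
  push_cast
  ring_nf

lemma summable_norm_exp_lattice_add (z : ℂ) (τ : ℍ) :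
    Summable fun n : ℕ => ‖cexp (2 * π * Complex.I * (n * τ + z))‖ := by
  simp only [exp_lattice_add, norm_mul, norm_pow]
  exact (summable_geometric_of_lt_one (by positivity)
    (by simpa using norm_exp_two_pi_mul_I_lt_one τ)).mul_left _

lemma summable_norm_exp_lattice_succ_add (z : ℂ) (τ : ℍ) :
    Summable fun n : ℕ => ‖cexp (2 * π * Complex.I * ((n + 1) * τ + z))‖ := by
  simpa using (summable_nat_add_iff 1).mpr (summable_norm_exp_lattice_add z τ)

lemma multipliable_one_sub_exp_lattice_add (z : ℂ) (τ : ℍ) :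
    Multipliable fun n : ℕ => 1 - cexp (2 * π * Complex.I * (n * τ + z)) := by
  simpa only [← sub_eq_add_neg] using multipliable_one_add_of_summable
    (f := fun n : ℕ => -cexp (2 * π * Complex.I * (n * τ + z)))
    (by simpa only [norm_neg] using summable_norm_exp_lattice_add z τ)

lemma multipliable_one_sub_exp_lattice_succ_add (z : ℂ) (τ : ℍ) :
    Multipliable fun n : ℕ => 1 - cexp (2 * π * Complex.I * ((n + 1) * τ + z)) := by
  simpa only [← sub_eq_add_neg] using multipliable_one_add_of_summable
    (f := fun n : ℕ => -cexp (2 * π * Complex.I * ((n + 1) * τ + z)))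
    (by simpa only [norm_neg] using summable_norm_exp_lattice_succ_add z τ)

lemma tendsto_finite_product_thetaProd (z : ℂ) (τ : ℍ) :
    Tendsto (fun N => ∏ k ∈ Finset.range N,
      ((1 - cexp (2 * π * Complex.I * z) * (cexp (π * Complex.I * τ) ^ 2) ^ k) *
        (1 - (cexp (π * Complex.I * τ) ^ 2) ^ (k + 1) / cexp (2 * π * Complex.I * z))))
      atTop (𝓝 (thetaProd z τ)) := by
  have hplus := multipliable_one_sub_exp_lattice_add z τ
  have hplus' := multipliable_one_sub_exp_lattice_succ_add z τ
  have hminus : Multipliable fun n : ℕ => 1 - cexp (2 * π * Complex.I * ((n + 1) * τ - z)) :=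
    multipliable_one_sub_exp_lattice_succ_add (-z) τ
  have hfactor : ∀ k : ℕ, (cexp (π * Complex.I * τ) ^ 2) ^ (k + 1) / cexp (2 * π * Complex.I * z) =
      cexp (2 * π * Complex.I * ((k + 1) * τ - z)) := fun k => by
    rw [div_eq_mul_inv, ← Complex.exp_neg, mul_comm, ← mul_neg, ← exp_lattice_add]
    push_cast
    rw [sub_eq_add_neg]
  have hprod : thetaProd z τ = ∏' n : ℕ, ((1 - cexp (2 * π * Complex.I * (n * τ + z))) *
      (1 - cexp (2 * π * Complex.I * ((n + 1) * τ - z)))) := by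
    rw [thetaProd, hplus'.tprod_mul hminus, hplus.tprod_mul hminus,
      tprod_eq_zero_mul' (f := fun n : ℕ => 1 - cexp (2 * π * Complex.I * (n * τ + z)))
        (by simpa using hplus')]
    simp [mul_assoc]
  simp only [hfactor, ← exp_lattice_add, hprod]
  exact (hplus.mul hminus).hasProd.tendsto_prod_nat

theorem jacobi_triple_product (z : ℂ) (τ : ℍ) :
    shiftedTheta z τ =
      (∏' n : ℕ, (1 - (cexp (π * Complex.I * τ) ^ 2) ^ (n + 1))) * thetaProd z τ := by
  have hq := norm_exp_two_pi_mul_I_lt_one τ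
  set Q := ∏' n : ℕ, (1 - (cexp (π * Complex.I * τ) ^ 2) ^ (n + 1)) with hQ
  have hQ0 : Q ≠ 0 := tprod_one_sub_pow_succ_ne_zero hq
  have hlim := tendsto_finite_product_thetaProd z τ
  simp only [finite_triple_product (Complex.exp_ne_zero (π * Complex.I * τ))
    (Complex.exp_ne_zero (2 * π * Complex.I * z))] at hlim
  obtain ⟨B, hB⟩ := exists_norm_centralGaussBinom_le hq
  have hdom := tendsto_tsum_of_dominated_convergence
    ((hasSum_shiftedTheta z τ).summable.norm.mul_right B)
    (fun j => (tendsto_centralGaussBinom hq j).const_mul _)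
    (Eventually.of_forall fun N j => by
      rw [norm_mul]
      exact mul_le_mul_of_nonneg_left (hB N j) (norm_nonneg _))
  rw [tsum_mul_right, (hasSum_shiftedTheta z τ).tsum_eq] at hdom
  rw [tendsto_nhds_unique hlim hdom, ← hQ, mul_comm, inv_mul_cancel_right₀ hQ0]

lemma tprod_one_sub_exp_lattice_succ_add_ne_zero {z : ℂ} {τ : ℍ}
    (h : ∀ n : ℕ, cexp (2 * π * Complex.I * ((n + 1) * τ + z)) ≠ 1) :
    ∏' n : ℕ, (1 - cexp (2 * π * Complex.I * ((n + 1) * τ + z))) ≠ 0 := by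
  simpa only [← sub_eq_add_neg] using tprod_one_add_ne_zero_of_summable
    (f := fun n : ℕ => -cexp (2 * π * Complex.I * ((n + 1) * τ + z)))
    (fun n => by simpa only [← sub_eq_add_neg] using sub_ne_zero.mpr (h n).symm)
    (by simpa only [norm_neg] using summable_norm_exp_lattice_succ_add z τ)

lemma shiftedTheta_ne_zero {z : ℂ} {τ : ℍ}
    (h : ∀ n : ℤ, cexp (2 * π * Complex.I * (n * τ + z)) ≠ 1) : shiftedTheta z τ ≠ 0 := by
  simp only [jacobi_triple_product, thetaProd, sub_eq_add_neg (_ * (τ : ℂ)) z]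
  rw [(multipliable_one_sub_exp_lattice_succ_add z τ).tprod_mul
      (multipliable_one_sub_exp_lattice_succ_add (-z) τ)]
  refine mul_ne_zero (tprod_one_sub_pow_succ_ne_zero (norm_exp_two_pi_mul_I_lt_one τ))
    (mul_ne_zero (sub_ne_zero.mpr (Ne.symm (by simpa using h 0))) (mul_ne_zero
      (tprod_one_sub_exp_lattice_succ_add_ne_zero fun n => by simpa using h (n + 1))
      (tprod_one_sub_exp_lattice_succ_add_ne_zero fun n hn => h (-(n + 1)) ?_)))
  push_cast
  rw [show 2 * π * Complex.I * (-(n + 1) * τ + z) = -(2 * π * Complex.I * ((n + 1) * τ + -z)) by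
    ring, Complex.exp_neg, hn, inv_one]

end TripleProduct

/-! ### Quotients of Siegel functions -/

section SiegelRatio

/-- The theta function with characteristic `r`: the Siegel function `g_r` up to a nonzero factor
that depends on `τ` only. -/
def siegelTheta (r : ℚ × ℚ) (τ : ℍ) : ℂ :=
  cexp (π * Complex.I * ((r.1 ^ 2 - r.1) * τ + r.2 * (r.1 - 1))) * shiftedTheta (r.1 * τ + r.2) τ

/-- The quotient `g_r / g_s` of two Siegel functions. -/
def siegelRatio (r s : ℚ × ℚ) (τ : ℍ) : ℂ := siegel r τ / siegel s τ

lemma siegel_eq_mul_siegelTheta (τ : ℍ) :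
    ∃ C : ℂ, C ≠ 0 ∧ ∀ r : ℚ × ℚ, siegel r τ = C * siegelTheta r τ := by
  have hQ := tprod_one_sub_pow_succ_ne_zero (norm_exp_two_pi_mul_I_lt_one τ)
  refine ⟨-cexp (π * Complex.I * (τ / 6)) *
    (∏' n : ℕ, (1 - (cexp (π * Complex.I * τ) ^ 2) ^ (n + 1)))⁻¹,
    mul_ne_zero (neg_ne_zero.mpr (Complex.exp_ne_zero _)) (inv_ne_zero hQ), fun r => ?_⟩
  have hprod : siegel r τ = -cexp (π * Complex.I * (((r.1 : ℂ) ^ 2 - r.1 + 1 / 6) * τ)) *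
      cexp (π * Complex.I * r.2 * (r.1 - 1)) * thetaProd (r.1 * τ + r.2) τ := by
    rw [siegel, thetaProd, mul_assoc _ (1 - _) _]
    congr 4
    funext n
    congr 4 <;> ring
  have hexp : cexp (π * Complex.I * (((r.1 : ℂ) ^ 2 - r.1 + 1 / 6) * τ)) *
      cexp (π * Complex.I * r.2 * (r.1 - 1)) = cexp (π * Complex.I * (τ / 6)) *
        cexp (π * Complex.I * (((r.1 : ℂ) ^ 2 - r.1) * τ + r.2 * (r.1 - 1))) := by
    rw [← Complex.exp_add, ← Complex.exp_add]
    congr 1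
    ring
  rw [hprod, siegelTheta, jacobi_triple_product, neg_mul, hexp]
  field_simp

lemma siegelRatio_eq_siegelTheta_div (r s : ℚ × ℚ) (τ : ℍ) :
    siegelRatio r s τ = siegelTheta r τ / siegelTheta s τ := by
  obtain ⟨C, hC, h⟩ := siegel_eq_mul_siegelTheta τ
  rw [siegelRatio, h, h, mul_div_mul_left _ _ hC]

lemma siegelTheta_ne_zero {r : ℚ × ℚ} (hr : NonIntegral r) (τ : ℍ) : siegelTheta r τ ≠ 0 := by
  refine mul_ne_zero (Complex.exp_ne_zero _) (shiftedTheta_ne_zero fun n hn => hr ?_)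
  obtain ⟨m, hm⟩ := Complex.exp_eq_one_iff.mp hn
  have hlattice : n * (τ : ℂ) + (r.1 * τ + r.2) = m :=
    mul_left_cancel₀ Complex.two_pi_I_ne_zero (by rw [hm]; ring)
  have him := congrArg Complex.im hlattice
  have hre := congrArg Complex.re hlattice
  simp only [Complex.add_im, Complex.mul_im, Complex.add_re, Complex.mul_re, Complex.intCast_re,
    Complex.intCast_im, Complex.ratCast_re, Complex.ratCast_im, coe_im, coe_re] at him hre
  have hr1 : (r.1 : ℝ) = -n := by
    have : (n + (r.1 : ℝ)) * τ.im = 0 := by linarith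
    linarith [(mul_eq_zero.mp this).resolve_right τ.im_ne_zero]
  refine ⟨-n, m, Prod.ext (by exact_mod_cast hr1) ?_⟩
  rw [hr1] at hre
  exact_mod_cast (by linarith : (r.2 : ℝ) = m)

lemma siegelRatio_ne_zero {r s : ℚ × ℚ} (hr : NonIntegral r) (hs : NonIntegral s) (τ : ℍ) :
    siegelRatio r s τ ≠ 0 := by
  rw [siegelRatio_eq_siegelTheta_div]
  exact div_ne_zero (siegelTheta_ne_zero hr τ) (siegelTheta_ne_zero hs τ)

lemma siegelTheta_add_one_left (u v : ℚ) (τ : ℍ) :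
    siegelTheta (u + 1, v) τ = cexp (π * Complex.I * (1 - v)) * siegelTheta (u, v) τ := by
  simp only [siegelTheta, shiftedTheta]
  push_cast
  rw [show (u + 1 : ℂ) * τ + v + 1 / 2 - τ / 2 = (u * τ + v + 1 / 2 - τ / 2) + τ by ring,
    jacobiTheta₂_add_left', ← mul_assoc, ← mul_assoc, ← Complex.exp_add, ← Complex.exp_add]
  congr 1
  rw [Complex.exp_eq_exp_iff_exists_int]
  exact ⟨-1, by push_cast; ring⟩

lemma siegelTheta_add_one_right (u v : ℚ) (τ : ℍ) :
    siegelTheta (u, v + 1) τ = cexp (π * Complex.I * (1 + u)) * siegelTheta (u, v) τ := by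
  simp only [siegelTheta, shiftedTheta]
  push_cast
  rw [show (u : ℂ) * τ + (v + 1) + 1 / 2 - τ / 2 = (u * τ + v + 1 / 2 - τ / 2) + 1 by ring,
    jacobiTheta₂_add_left, ← mul_assoc, ← Complex.exp_add]
  congr 1
  rw [Complex.exp_eq_exp_iff_exists_int]
  exact ⟨-1, by push_cast; ring⟩

lemma apply_add_int_eq_exp_mul {R : Type*} [Ring R] {φ : R → ℂ} {c : ℂ}
    (h : ∀ x, φ (x + 1) = cexp c * φ x) (x : R) (n : ℤ) : φ (x + n) = cexp (n * c) * φ x := by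
  induction n with
  | zero => simp
  | succ n ih =>
    push_cast at ih ⊢
    rw [← add_assoc, h, ih, ← mul_assoc, ← Complex.exp_add]
    ring_nf
  | pred n ih =>
    have hstep := h (x + (-(n : ℤ) - 1 : ℤ))
    push_cast at ih hstep ⊢
    rw [show x + (-(n : R) - 1) + 1 = x + -n by abel, ih] at hstep
    rw [← mul_right_inj' (Complex.exp_ne_zero c), ← hstep, ← mul_assoc, ← Complex.exp_add]
    ring_nf

lemma siegelTheta_add_int (u v : ℚ) (n k : ℤ) (τ : ℍ) :
    siegelTheta (u + n, v + k) τ =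
      cexp (π * Complex.I * (n + k + k * u - n * v - n * k)) * siegelTheta (u, v) τ := by
  rw [apply_add_int_eq_exp_mul (φ := fun u => siegelTheta (u, v + k) τ)
      (fun u => siegelTheta_add_one_left u (v + k) τ) u n,
    apply_add_int_eq_exp_mul (φ := fun v => siegelTheta (u, v) τ)
      (fun v => siegelTheta_add_one_right u v τ) v k, ← mul_assoc, ← Complex.exp_add]
  congr 2
  push_cast
  ring

lemma siegelRatio_add_int (u v u' v' : ℚ) (n k n' k' : ℤ) (τ : ℍ) :
    siegelRatio (u + n, v + k) (u' + n', v' + k') τ =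
      cexp (π * Complex.I * ((n + k + k * u - n * v - n * k) -
        (n' + k' + k' * u' - n' * v' - n' * k'))) * siegelRatio (u, v) (u', v') τ := by
  rw [siegelRatio_eq_siegelTheta_div, siegelTheta_add_int, siegelTheta_add_int, mul_div_mul_comm,
    ← Complex.exp_sub, ← mul_sub, siegelRatio_eq_siegelTheta_div]

lemma jacobiTheta₂_add_one_right (z τ : ℂ) :
    jacobiTheta₂ z (τ + 1) = jacobiTheta₂ (z + 1 / 2) τ := by
  refine tsum_congr fun n => ?_
  rw [jacobiTheta₂_term, jacobiTheta₂_term, Complex.exp_eq_exp_iff_exists_int]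
  obtain ⟨k, hk⟩ := Int.even_mul_pred_self n
  have hk' : (n : ℂ) * (n - 1) = k + k := by exact_mod_cast hk
  exact ⟨k, by linear_combination (π * Complex.I) * hk'⟩

lemma siegelTheta_T_smul (r : ℚ × ℚ) (τ : ℍ) :
    siegelTheta r (ModularGroup.T • τ) = siegelTheta (tAct ModularGroup.T r) τ := by
  have hT : ((ModularGroup.T • τ : ℍ) : ℂ) = τ + 1 := by
    rw [modular_T_smul, coe_vadd, Complex.ofReal_one, add_comm]
  simp only [siegelTheta, shiftedTheta, tAct, ModularGroup.coe_T, Matrix.of_apply,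
    Matrix.cons_val_zero, Matrix.cons_val_one, Matrix.cons_val_fin_one, hT,
    jacobiTheta₂_add_one_right]
  push_cast
  ring_nf

lemma siegelTheta_S_smul (τ : ℍ) : ∃ D : ℂ, D ≠ 0 ∧ ∀ r : ℚ × ℚ,
    siegelTheta r (ModularGroup.S • τ) = D * siegelTheta (tAct ModularGroup.S r) τ := by
  have hτ : (τ : ℂ) ≠ 0 := τ.ne_zero
  have hS : ((ModularGroup.S • τ : ℍ) : ℂ) = -1 / τ := by
    rw [modular_S_smul, coe_mk, inv_neg, neg_div, one_div]
  have hroot : (-Complex.I * (τ : ℂ)) ^ (1 / 2 : ℂ) ≠ 0 := by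
    simp [Complex.cpow_eq_zero_iff, hτ]
  refine ⟨(-Complex.I * τ) ^ (1 / 2 : ℂ) * cexp (π * Complex.I * (τ / 4 + 1 / (4 * τ) - 1 / 2)),
    mul_ne_zero hroot (Complex.exp_ne_zero _), fun r => ?_⟩
  have htAct : tAct ModularGroup.S r = (r.2, -r.1) := by simp [tAct, ModularGroup.S]
  simp only [siegelTheta, shiftedTheta, htAct, hS]
  push_cast
  set z : ℂ := r.2 * τ + -r.1 + 1 / 2 - τ / 2 with hz
  have harg : (r.1 : ℂ) * (-1 / τ) + r.2 + 1 / 2 - -1 / τ / 2 = (z + τ) / τ := by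
    rw [hz]; field_simp; ring
  have hfun := jacobiTheta₂_functional_equation (z + τ) τ
  rw [jacobiTheta₂_add_left', one_div_mul_eq_div, div_mul_eq_mul_div, eq_div_iff hroot] at hfun
  have hphase : cexp (π * Complex.I * ((r.1 ^ 2 - r.1) * (-1 / τ) + r.2 * (r.1 - 1))) *
      cexp (-π * Complex.I * (τ + 2 * z)) = cexp (π * Complex.I * (τ / 4 + 1 / (4 * τ) - 1 / 2)) *
        cexp (π * Complex.I * ((r.2 ^ 2 - r.2) * τ + -r.1 * (r.2 - 1))) *
        cexp (-π * Complex.I * (z + τ) ^ 2 / τ) := by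
    rw [← Complex.exp_add, ← Complex.exp_add, ← Complex.exp_add, hz]
    congr 1
    field_simp
    ring
  rw [harg]
  apply mul_left_cancel₀ (Complex.exp_ne_zero (-π * Complex.I * (z + τ) ^ 2 / τ))
  linear_combination
    (-cexp (π * Complex.I * ((r.1 ^ 2 - r.1) * (-1 / τ) + r.2 * (r.1 - 1)))) * hfun +
      jacobiTheta₂ z τ * (-Complex.I * τ) ^ (1 / 2 : ℂ) * hphase

lemma tAct_one (r : ℚ × ℚ) : tAct 1 r = r := by
  simp [tAct]

lemma tAct_mul (γ δ : SL(2, ℤ)) (r : ℚ × ℚ) : tAct (γ * δ) r = tAct δ (tAct γ r) := by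
  have hentry : ∀ i j, (γ * δ) i j = γ i 0 * δ 0 j + γ i 1 * δ 1 j := fun i j => by
    simp [Matrix.mul_apply, Fin.sum_univ_two]
  simp only [tAct, hentry]
  push_cast
  exact Prod.ext (by ring) (by ring)

theorem siegelRatio_smul (γ : SL(2, ℤ)) (r s : ℚ × ℚ) (τ : ℍ) :
    siegelRatio r s (γ • τ) = siegelRatio (tAct γ r) (tAct γ s) τ := by
  have hmem : γ ∈ Subgroup.closure {ModularGroup.S, ModularGroup.T} := by
    rw [SpecialLinearGroup.SL2Z_generators]
    trivial
  induction hmem using Subgroup.closure_induction generalizing r s τ with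
  | mem γ hγ =>
    rcases hγ with rfl | rfl
    · obtain ⟨D, hD, h⟩ := siegelTheta_S_smul τ
      simp only [siegelRatio_eq_siegelTheta_div, h, mul_div_mul_left _ _ hD]
    · simp only [siegelRatio_eq_siegelTheta_div, siegelTheta_T_smul]
  | one => rw [one_smul, tAct_one, tAct_one]
  | mul γ δ _ _ hγ hδ => rw [mul_smul, hγ, hδ, tAct_mul, tAct_mul]
  | inv γ _ hγ =>
    have h := hγ (tAct γ⁻¹ r) (tAct γ⁻¹ s) (γ⁻¹ • τ)
    rw [smul_inv_smul, ← tAct_mul, ← tAct_mul, inv_mul_cancel, tAct_one, tAct_one] at h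
    exact h.symm

end SiegelRatio

/-! ### Behaviour at `i∞` -/

section Asymptotics

open Filter Topology

lemma norm_shiftedTheta_term (a v : ℝ) (τ : ℍ) (j : ℤ) :
    ‖(-1) ^ j * cexp (π * Complex.I * τ) ^ (j * (j - 1)) *
      cexp (2 * π * Complex.I * (a * τ + v)) ^ j‖ =
        Real.exp (-(π * (j * (j - 1 + 2 * a)) * τ.im)) := by
  rw [norm_mul, norm_mul, norm_zpow, norm_neg, norm_one, _root_.one_zpow, one_mul,
    ← Complex.exp_int_mul, ← Complex.exp_int_mul, ← norm_mul, ← Complex.exp_add, Complex.norm_exp]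
  congr 1
  rw [show ((j * (j - 1) : ℤ) : ℂ) * (π * Complex.I * τ) +
      (j : ℂ) * (2 * π * Complex.I * (a * τ + v)) =
      ((π * (j * (j - 1 + 2 * a)) : ℝ) * τ + (2 * π * j * v : ℝ)) * Complex.I by push_cast; ring,
    Complex.mul_I_re, Complex.add_im, Complex.im_ofReal_mul, Complex.ofReal_im, add_zero, coe_im]

lemma mul_sub_one_add_two_mul_pos {a : ℝ} (ha : 0 ≤ a) (ha1 : a < 1) {j : ℤ} (hj : j ≠ 0)
    (hj1 : ¬(j = 1 ∧ a = 0)) : 0 < (j : ℝ) * (j - 1 + 2 * a) := by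
  rcases lt_trichotomy j 1 with h | rfl | h
  · have : (j : ℝ) ≤ -1 := by exact_mod_cast (by omega : j ≤ -1)
    nlinarith
  · have : 0 < a := ha.lt_of_ne' fun h => hj1 ⟨rfl, h⟩
    norm_num
    linarith
  · have : (2 : ℝ) ≤ j := by exact_mod_cast (by omega : 2 ≤ j)
    nlinarith

lemma tendsto_im_atImInfty : Tendsto UpperHalfPlane.im atImInfty atTop := tendsto_comap

lemma eventually_one_le_im : ∀ᶠ τ : ℍ in atImInfty, 1 ≤ τ.im :=
  tendsto_im_atImInfty.eventually_ge_atTop 1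

lemma tendsto_shiftedTheta {a : ℝ} (v : ℝ) (ha : 0 ≤ a) (ha1 : a < 1) :
    Tendsto (fun τ : ℍ => shiftedTheta (a * τ + v) τ) atImInfty
      (𝓝 (if a = 0 then 1 - cexp (2 * π * Complex.I * v) else 1)) := by
  have hlim : (if a = 0 then 1 - cexp (2 * π * Complex.I * v) else 1) = ∑' j : ℤ,
      if j = 0 then 1 else if j = 1 ∧ a = 0 then -cexp (2 * π * Complex.I * v) else 0 := by
    rw [tsum_eq_sum (s := {0, 1}) fun j hj => by
      simp only [Finset.mem_insert, Finset.mem_singleton, not_or] at hj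
      simp [hj.1, hj.2]]
    by_cases h : a = 0 <;> simp [h, sub_eq_add_neg]
  rw [hlim]
  simp only [← (hasSum_shiftedTheta _ _).tsum_eq]
  refine tendsto_tsum_of_dominated_convergence
    (hasSum_shiftedTheta (a * UpperHalfPlane.I + v) UpperHalfPlane.I).summable.norm
    (fun j => ?_) ?_
  · by_cases hj : j = 0
    · simp [hj]
    by_cases hj1 : j = 1 ∧ a = 0
    · simp [hj1]
    rw [if_neg hj, if_neg hj1, tendsto_zero_iff_norm_tendsto_zero]
    simp only [norm_shiftedTheta_term]
    exact Real.tendsto_exp_neg_atTop_nhds_zero.comp (tendsto_im_atImInfty.const_mul_atTop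
      (mul_pos Real.pi_pos (mul_sub_one_add_two_mul_pos ha ha1 hj hj1)))
  · filter_upwards [eventually_one_le_im] with τ hτ j
    rw [norm_shiftedTheta_term, norm_shiftedTheta_term, UpperHalfPlane.I_im, Real.exp_le_exp,
      neg_le_neg_iff]
    have hexponent : 0 ≤ (j : ℝ) * (j - 1 + 2 * a) := by
      by_cases hj : j = 0
      · simp [hj]
      by_cases hj1 : j = 1 ∧ a = 0
      · simp [hj1]
      exact (mul_sub_one_add_two_mul_pos ha ha1 hj hj1).le
    exact mul_le_mul_of_nonneg_left hτ (mul_nonneg Real.pi_pos.le hexponent)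

/-- The exponent `B₂(⟨u⟩) - 1/6` that governs the growth of `siegelTheta (u, v)` at `i∞`, where
`⟨u⟩` is the fractional part: the form grows like `exp (π i siegelOrder u τ)`. -/
def siegelOrder (u : ℚ) : ℚ := Int.fract u ^ 2 - Int.fract u

/-- The leading coefficient of `siegelTheta r` at `i∞`. -/
def siegelLeadingCoeff (r : ℚ × ℚ) : ℂ :=
  cexp (π * Complex.I * (⌊r.1⌋ - ⌊r.1⌋ * r.2 + r.2 * (Int.fract r.1 - 1 : ℚ))) *
    if Int.fract r.1 = 0 then 1 - cexp (2 * π * Complex.I * r.2) else 1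

lemma siegelLeadingCoeff_ne_zero {r : ℚ × ℚ} (hr : NonIntegral r) : siegelLeadingCoeff r ≠ 0 := by
  refine mul_ne_zero (Complex.exp_ne_zero _) ?_
  split_ifs with h
  · refine fun h1 => hr ?_
    obtain ⟨m, hm⟩ := Complex.exp_eq_one_iff.mp (sub_eq_zero.mp h1).symm
    have hr2 : (r.2 : ℂ) = m := mul_left_cancel₀ Complex.two_pi_I_ne_zero (by rw [hm]; ring)
    exact ⟨⌊r.1⌋, m, Prod.ext (sub_eq_zero.mp h) (by exact_mod_cast hr2)⟩
  · exact one_ne_zero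

lemma siegelLeadingCoeff_of_mem_Ioo {u : ℚ} (hu : u ∈ Set.Ioo (0 : ℚ) 1) (v : ℚ) :
    siegelLeadingCoeff (u, v) = cexp (π * Complex.I * (v * (u - 1))) := by
  have hfract : Int.fract u = u := Int.fract_eq_self.mpr ⟨hu.1.le, hu.2⟩
  have hfloor : ⌊u⌋ = 0 := Int.floor_eq_zero_iff.mpr ⟨hu.1.le, hu.2⟩
  simp [siegelLeadingCoeff, hfract, hfloor, hu.1.ne']

lemma siegelLeadingCoeff_zero_left (v : ℚ) :
    siegelLeadingCoeff (0, v) = -2 * Complex.I * Complex.sin (π * v) := by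
  have hexp : cexp (π * Complex.I * -v) * (1 - cexp (2 * π * Complex.I * v)) =
      cexp (-(π * v) * Complex.I) - cexp (π * v * Complex.I) := by
    rw [mul_sub, mul_one, ← Complex.exp_add]
    ring_nf
  simp only [siegelLeadingCoeff, Int.floor_zero, Int.fract_zero, if_true, Int.cast_zero, zero_mul,
    sub_self, zero_add, zero_sub, Rat.cast_neg, Rat.cast_one, mul_neg_one]
  rw [hexp, Complex.sin]
  linear_combination (cexp (-(π * v) * Complex.I) - cexp (π * v * Complex.I)) * Complex.I_sq

lemma tendsto_exp_mul_siegelTheta (r : ℚ × ℚ) :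
    Tendsto (fun τ : ℍ => cexp (-(π * Complex.I * (siegelOrder r.1 * τ))) * siegelTheta r τ)
      atImInfty (𝓝 (siegelLeadingCoeff r)) := by
  have hlim := (tendsto_shiftedTheta r.2 (a := (Int.fract r.1 : ℚ))
    (by exact_mod_cast Int.fract_nonneg r.1) (by exact_mod_cast Int.fract_lt_one r.1)).const_mul
      (cexp (π * Complex.I * (⌊r.1⌋ - ⌊r.1⌋ * r.2 + r.2 * (Int.fract r.1 - 1 : ℚ))))
  simp only [Rat.cast_eq_zero, Complex.ofReal_ratCast] at hlim
  refine hlim.congr fun τ => ?_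
  conv_rhs => rw [show r = (Int.fract r.1 + ⌊r.1⌋, r.2 + (0 : ℤ)) by simp [Int.fract_add_floor],
    siegelTheta_add_int, siegelTheta, ← mul_assoc, ← mul_assoc, ← Complex.exp_add,
    ← Complex.exp_add]
  simp only [siegelOrder, Int.fract_add_intCast, Int.fract_fract]
  congr 2
  push_cast
  ring

variable {r s : ℚ × ℚ}

lemma tendsto_exp_mul_siegelRatio (hs : NonIntegral s) :
    Tendsto (fun τ : ℍ =>
      cexp (-(π * Complex.I * ((siegelOrder r.1 - siegelOrder s.1 : ℚ) * τ))) * siegelRatio r s τ)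
      atImInfty (𝓝 (siegelLeadingCoeff r / siegelLeadingCoeff s)) := by
  refine ((tendsto_exp_mul_siegelTheta r).div (tendsto_exp_mul_siegelTheta s)
    (siegelLeadingCoeff_ne_zero hs)).congr fun τ => ?_
  rw [Pi.div_apply, siegelRatio_eq_siegelTheta_div, mul_div_mul_comm, ← Complex.exp_sub]
  congr 2
  push_cast
  ring

lemma tendsto_siegelRatio (hs : NonIntegral s) (h : siegelOrder r.1 = siegelOrder s.1) :
    Tendsto (siegelRatio r s) atImInfty (𝓝 (siegelLeadingCoeff r / siegelLeadingCoeff s)) := by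
  simpa [h] using tendsto_exp_mul_siegelRatio (r := r) hs

lemma norm_exp_pi_mul_I_mul (c : ℚ) (τ : ℍ) :
    ‖cexp (π * Complex.I * (c * τ))‖ = Real.exp (-(π * c * τ.im)) := by
  rw [Complex.norm_exp, show π * Complex.I * (c * τ) = ((π * c : ℝ) * τ : ℂ) * Complex.I by
    push_cast; ring, Complex.mul_I_re, Complex.im_ofReal_mul, coe_im]

lemma siegelRatio_eq_exp_mul (c : ℚ) (τ : ℍ) :
    siegelRatio r s τ =
      cexp (π * Complex.I * (c * τ)) * (cexp (-(π * Complex.I * (c * τ))) * siegelRatio r s τ) := by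
  rw [← mul_assoc, ← Complex.exp_add, add_neg_cancel, Complex.exp_zero, one_mul]

lemma isZeroAtImInfty_siegelRatio (hs : NonIntegral s) (h : siegelOrder s.1 < siegelOrder r.1) :
    IsZeroAtImInfty (siegelRatio r s) := by
  have hexp : Tendsto (fun τ : ℍ =>
      cexp (π * Complex.I * ((siegelOrder r.1 - siegelOrder s.1 : ℚ) * τ))) atImInfty (𝓝 0) := by
    rw [tendsto_zero_iff_norm_tendsto_zero]
    simp only [norm_exp_pi_mul_I_mul]
    exact Real.tendsto_exp_neg_atTop_nhds_zero.comp (tendsto_im_atImInfty.const_mul_atTop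
      (mul_pos Real.pi_pos (by exact_mod_cast sub_pos.mpr h)))
  have hlim := hexp.mul (tendsto_exp_mul_siegelRatio (r := r) hs)
  rw [zero_mul] at hlim
  exact hlim.congr fun τ => (siegelRatio_eq_exp_mul _ τ).symm

lemma mdifferentiable_siegelTheta (r : ℚ × ℚ) : MDifferentiable 𝓘(ℂ) 𝓘(ℂ) (siegelTheta r) := by
  rw [UpperHalfPlane.mdifferentiable_iff]
  refine fun τ hτ => DifferentiableAt.differentiableWithinAt ?_
  have htheta : DifferentiableAt ℂ
      (fun τ : ℂ => jacobiTheta₂ (r.1 * τ + r.2 + 1 / 2 - τ / 2) τ) τ :=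
    DifferentiableAt.comp (g := fun p : ℂ × ℂ => jacobiTheta₂ p.1 p.2)
      (f := fun τ : ℂ => (r.1 * τ + r.2 + 1 / 2 - τ / 2, τ)) τ
      (hasFDerivAt_jacobiTheta₂ _ hτ).differentiableAt (by fun_prop)
  have hfun : DifferentiableAt ℂ (fun τ : ℂ => cexp (π * Complex.I * ((r.1 ^ 2 - r.1) * τ +
      r.2 * (r.1 - 1))) * jacobiTheta₂ (r.1 * τ + r.2 + 1 / 2 - τ / 2) τ) τ :=
    DifferentiableAt.mul (by fun_prop) htheta
  refine hfun.congr_of_eventuallyEq ?_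
  filter_upwards [isOpen_upperHalfPlaneSet.mem_nhds hτ] with z hz
  simp [siegelTheta, shiftedTheta, ofComplex_apply_of_im_pos hz]

lemma mdifferentiable_siegelRatio (r : ℚ × ℚ) (hs : NonIntegral s) :
    MDifferentiable 𝓘(ℂ) 𝓘(ℂ) (siegelRatio r s) := by
  have heq : siegelRatio r s = fun τ => siegelTheta r τ / siegelTheta s τ :=
    funext (siegelRatio_eq_siegelTheta_div r s)
  rw [heq, UpperHalfPlane.mdifferentiable_iff]
  exact (UpperHalfPlane.mdifferentiable_iff.mp (mdifferentiable_siegelTheta r)).div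
    (UpperHalfPlane.mdifferentiable_iff.mp (mdifferentiable_siegelTheta s))
    fun τ _ => siegelTheta_ne_zero hs _

end Asymptotics

/-! ### `q`-expansions -/

section QExpansion

open Filter Topology

variable {K : Type*} [Field K] [Algebra K ℂ] {h : ℝ} {f g : ℍ → ℂ} {p r : PowerSeries K}

/-- The local parameter `q_h = exp (2πiτ/h)` at a cusp of width `h`, as a function on `ℍ`. -/
def cuspParam (h : ℝ) : ℍ → ℂ := fun τ => Function.Periodic.qParam h τ

lemma cuspParam_ne_zero (h : ℝ) (τ : ℍ) : cuspParam h τ ≠ 0 := Function.Periodic.qParam_ne_zero _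

lemma cuspParam_vadd (h x : ℝ) (τ : ℍ) :
    cuspParam h (x +ᵥ τ) = Function.Periodic.qParam h x * cuspParam h τ := by
  simp only [cuspParam, Function.Periodic.qParam, coe_vadd, ← Complex.exp_add]
  congr 1
  ring

lemma cuspParam_natCast_pow (N : ℕ) [NeZero N] : cuspParam N ^ N = cuspParam 1 := funext fun τ => by
  have : (N : ℂ) ≠ 0 := NeZero.ne _
  rw [Pi.pow_apply, cuspParam, cuspParam, Function.Periodic.qParam, Function.Periodic.qParam,
    ← Complex.exp_nat_mul]
  congr 1
  push_cast
  field_simp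

lemma mdifferentiable_cuspParam (h : ℝ) : MDifferentiable 𝓘(ℂ) 𝓘(ℂ) (cuspParam h) :=
  Function.Periodic.differentiable_qParam.mdifferentiable.comp mdifferentiable_coe

lemma isZeroAtImInfty_cuspParam (hh : 0 < h) : IsZeroAtImInfty (cuspParam h) :=
  qParam_tendsto_atImInfty hh

/-- The power series `p` represents `f` on all of `ℍ` in the parameter `q_h`. -/
def HasQExpansion (h : ℝ) (f : ℍ → ℂ) (p : PowerSeries K) : Prop :=
  ∀ τ : ℍ, HasSum (fun n => p.coeff n • cuspParam h τ ^ n) (f τ)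

lemma hasQExpansion_map_iff :
    HasQExpansion h f (p.map (algebraMap K ℂ)) ↔ HasQExpansion h f p := by
  simp only [HasQExpansion, PowerSeries.coeff_map, algebraMap_smul]

lemma hasQExpansion_algebraMap (h : ℝ) (c : K) :
    HasQExpansion h (algebraMap K (ℍ → ℂ) c) (PowerSeries.C c) := fun τ => by
  convert! hasSum_single (f := fun n => (PowerSeries.C c).coeff n • cuspParam h τ ^ n) 0 ?_ using 1
  · simp [Algebra.smul_def]
  · intro n hn
    simp [PowerSeries.coeff_C, hn]

lemma hasQExpansion_cuspParam_pow (h : ℝ) (k : ℕ) :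
    HasQExpansion h (cuspParam h ^ k) (PowerSeries.X ^ k : PowerSeries K) := fun τ => by
  convert! hasSum_single
    (f := fun n => (PowerSeries.X ^ k : PowerSeries K).coeff n • cuspParam h τ ^ n) k ?_ using 1
  · simp [PowerSeries.coeff_X_pow]
  · intro n hn
    simp [PowerSeries.coeff_X_pow, hn]

namespace HasQExpansion

lemma add (hf : HasQExpansion h f p) (hg : HasQExpansion h g r) :
    HasQExpansion h (f + g) (p + r) := fun τ => by
  simpa only [map_add, add_smul] using! (hf τ).add (hg τ)

lemma sub (hf : HasQExpansion h f p) (hg : HasQExpansion h g r) :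
    HasQExpansion h (f - g) (p - r) := fun τ => by
  simpa only [map_sub, sub_smul] using! (hf τ).sub (hg τ)

lemma mul (hf : HasQExpansion h f p) (hg : HasQExpansion h g r) :
    HasQExpansion h (f * g) (p * r) := fun τ => by
  have hfs := (hf τ).summable.norm
  have hgs := (hg τ).summable.norm
  have hprod := (summable_norm_sum_mul_antidiagonal_of_summable_norm hfs hgs).of_norm.hasSum
  rw [← tsum_mul_tsum_eq_tsum_sum_antidiagonal_of_summable_norm hfs hgs, (hf τ).tsum_eq,
    (hg τ).tsum_eq] at hprod
  refine hprod.congr_fun fun n => ?_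
  rw [PowerSeries.coeff_mul, Finset.sum_smul]
  refine Finset.sum_congr rfl fun x hx => ?_
  rw [smul_mul_smul_comm, ← pow_add, Finset.HasAntidiagonal.mem_antidiagonal.mp hx]

lemma of_X_pow_mul (k : ℕ) (hf : HasQExpansion h (cuspParam h ^ k * f) (PowerSeries.X ^ k * p)) :
    HasQExpansion h f p := fun τ => by
  have hsum := (hasSum_nat_add_iff' k).mpr (hf τ)
  rw [Finset.sum_eq_zero fun n hn => by
    rw [PowerSeries.coeff_X_pow_mul', if_neg (by simpa using hn), zero_smul], sub_zero] at hsum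
  have hq : cuspParam h τ ^ k ≠ 0 := pow_ne_zero k (cuspParam_ne_zero h τ)
  have hscaled := hsum.mul_left (cuspParam h τ ^ k)⁻¹
  rw [Pi.mul_apply, Pi.pow_apply, inv_mul_cancel_left₀ hq] at hscaled
  refine hscaled.congr_fun fun n => ?_
  rw [PowerSeries.coeff_X_pow_mul', if_pos (Nat.le_add_left k n), Nat.add_sub_cancel,
    mul_smul_comm, pow_add, mul_comm (cuspParam h τ ^ n), inv_mul_cancel_left₀ hq]

lemma isBoundedAtImInfty (hh : 0 < h) (hf : HasQExpansion h f p) : IsBoundedAtImInfty f :=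
  isBoundedAtImInfty_of_hasSum_qExpansion (c := fun n => algebraMap K ℂ (p.coeff n)) hh
    (by simpa only [algebraMap_smul] using! hf)

lemma tendsto (hh : 0 < h) (hf : HasQExpansion h f p) :
    Tendsto f atImInfty (𝓝 (algebraMap K ℂ p.constantCoeff)) := by
  set c := algebraMap K (ℍ → ℂ) p.constantCoeff with hc
  set u := (cuspParam h)⁻¹ * (f - c)
  have hu : cuspParam h ^ 1 * u = f - c := funext fun τ => by
    simp [u, mul_inv_cancel_left₀ (cuspParam_ne_zero h τ)]
  have hshift : HasQExpansion h (cuspParam h ^ 1 * u)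
      (PowerSeries.X ^ 1 * PowerSeries.mk fun n => p.coeff (n + 1)) := by
    convert hf.sub (hasQExpansion_algebraMap h p.constantCoeff) using 1
    rw [pow_one, eq_sub_iff_add_eq]
    exact p.eq_X_mul_shift_add_const.symm
  have hzero := (isZeroAtImInfty_cuspParam hh).mul_boundedAtFilter
    ((of_X_pow_mul 1 hshift).isBoundedAtImInfty hh)
  rw [← pow_one (cuspParam h), hu] at hzero
  simpa [hc] using! Tendsto.add_const (algebraMap K ℂ p.constantCoeff) hzero

lemma eq_zero (hh : 0 < h) (hf : HasQExpansion h 0 p) : p = 0 := by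
  by_contra hp
  rw [← PowerSeries.X_pow_order_mul_divXPowOrder (f := p),
    ← mul_zero (cuspParam h ^ p.order.toNat)] at hf
  have hlim : algebraMap K ℂ p.divXPowOrder.constantCoeff = 0 :=
    tendsto_nhds_unique ((of_X_pow_mul _ hf).tendsto hh) tendsto_const_nhds
  exact hp (PowerSeries.constantCoeff_divXPowOrder_eq_zero_iff.mp ((map_eq_zero _).mp hlim))

lemma unique (hh : 0 < h) (hf : HasQExpansion h f p) (hf' : HasQExpansion h f r) : p = r :=
  sub_eq_zero.mp (eq_zero hh (by simpa using hf.sub hf'))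

lemma vadd_eq (hh : h ≠ 0) (hf : HasQExpansion h f p) (τ : ℍ) : f (h +ᵥ τ) = f τ := by
  have hsum := hf (h +ᵥ τ)
  rw [cuspParam_vadd, Function.Periodic.qParam, mul_div_assoc, div_self (by exact_mod_cast hh),
    mul_one, Complex.exp_two_pi_mul_I, one_mul] at hsum
  exact hsum.unique (hf τ)

end HasQExpansion

lemma exists_hasQExpansion_of_hasSum {ι : Type*} (c : ι → K) {e : ι → ℕ}
    (he : ∀ n, (e ⁻¹' {n}).Finite)
    (hf : ∀ τ, HasSum (fun i => c i • cuspParam h τ ^ e i) (f τ)) :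
    ∃ p : PowerSeries K, HasQExpansion h f p := by
  refine ⟨PowerSeries.mk fun n => ∑ i ∈ (he n).toFinset, c i, fun τ => ?_⟩
  refine ((hf τ).tsum_fiberwise e).congr_fun fun n => ?_
  rw [tsum_congr_set_coe (fun i => c i • cuspParam h τ ^ e i) (he n).coe_toFinset.symm,
    Finset.tsum_subtype' _ (fun i => c i • cuspParam h τ ^ e i), PowerSeries.coeff_mk,
    Finset.sum_smul]
  refine Finset.sum_congr rfl fun i hi => ?_
  rw [show e i = n by simpa using hi]

lemma exists_hasQExpansion (hh : 0 < h) (hper : ∀ τ, f (h +ᵥ τ) = f τ)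
    (hd : MDifferentiable 𝓘(ℂ) 𝓘(ℂ) f) (hb : IsBoundedAtImInfty f) :
    ∃ p : PowerSeries ℂ, HasQExpansion h f p := by
  refine ⟨qExpansion h f, fun τ => hasSum_qExpansion hh (fun w => ?_) hd hb τ⟩
  rcases lt_or_ge 0 w.im with hw | hw
  · have hw' : 0 < (w + h).im := by simpa using hw
    simp only [Function.comp_apply, ofComplex_apply_of_im_pos hw, ofComplex_apply_of_im_pos hw']
    rw [← hper ⟨w, hw⟩]
    congr 1
    ext
    simp [add_comm]
  · have hw' : (w + h).im ≤ 0 := by simpa using hw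
    simp [ofComplex_apply_of_im_nonpos hw, ofComplex_apply_of_im_nonpos hw']

lemma mdifferentiable_inv (hd : MDifferentiable 𝓘(ℂ) 𝓘(ℂ) f) (h0 : ∀ τ, f τ ≠ 0) :
    MDifferentiable 𝓘(ℂ) 𝓘(ℂ) f⁻¹ := by
  rw [UpperHalfPlane.mdifferentiable_iff] at hd ⊢
  exact hd.inv fun τ _ => h0 _

lemma HasQExpansion.inv (hh : 0 < h) (hf : HasQExpansion h f p) (hp : p.constantCoeff ≠ 0)
    (hd : MDifferentiable 𝓘(ℂ) 𝓘(ℂ) f) (h0 : ∀ τ, f τ ≠ 0) : HasQExpansion h f⁻¹ p⁻¹ := by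
  have hb : IsBoundedAtImInfty f⁻¹ := ((hf.tendsto hh).inv₀ (by simpa using hp)).isBigO_one ℝ
  obtain ⟨s, hs⟩ := exists_hasQExpansion hh (fun τ => by simp [hf.vadd_eq hh.ne'])
    (mdifferentiable_inv hd h0) hb
  have hone : f * f⁻¹ = algebraMap ℂ (ℍ → ℂ) 1 := funext fun τ => by simp [h0 τ]
  have hmul : p.map (algebraMap K ℂ) * s = 1 := by
    have := (hasQExpansion_map_iff.mpr hf).mul hs
    rw [hone] at this
    simpa using this.unique hh (hasQExpansion_algebraMap h 1)
  have hmap : p.map (algebraMap K ℂ) * p⁻¹.map (algebraMap K ℂ) = 1 := by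
    rw [← map_mul, PowerSeries.mul_inv_cancel _ hp, map_one]
  have hsp : s = p⁻¹.map (algebraMap K ℂ) :=
    left_inv_eq_right_inv ((mul_comm _ _).trans hmul) hmap
  rwa [← hasQExpansion_map_iff, ← hsp]

/-- The functions with a `q_h`-expansion over `K` with finitely many negative exponents. -/
def laurentFunctions (K : Type*) [Field K] [Algebra K ℂ] (h : ℝ) : Subalgebra K (ℍ → ℂ) where
  carrier := {f | ∃ (k : ℕ) (p : PowerSeries K), HasQExpansion h (cuspParam h ^ k * f) p}
  mul_mem' := by
    rintro f g ⟨k, p, hf⟩ ⟨l, r, hg⟩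
    exact ⟨k + l, p * r, by simpa only [pow_add, mul_mul_mul_comm] using hf.mul hg⟩
  add_mem' := by
    rintro f g ⟨k, p, hf⟩ ⟨l, r, hg⟩
    refine ⟨k + l, PowerSeries.X ^ l * p + PowerSeries.X ^ k * r, ?_⟩
    convert ((hasQExpansion_cuspParam_pow h l).mul hf).add
      ((hasQExpansion_cuspParam_pow h k).mul hg) using 1
    ring
  algebraMap_mem' c := ⟨0, PowerSeries.C c, by simpa using hasQExpansion_algebraMap h c⟩

lemma mem_laurentFunctions_iff : f ∈ laurentFunctions K h ↔ ∃ (n₀ : ℤ) (c : ℕ → K),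
    ∀ τ, HasSum (fun n : ℕ => c n • cuspParam h τ ^ (n₀ + n)) (f τ) := by
  have hq (τ : ℍ) : cuspParam h τ ≠ 0 := cuspParam_ne_zero h τ
  constructor
  · rintro ⟨k, p, hp⟩
    refine ⟨-k, fun n => p.coeff n, fun τ => ?_⟩
    have hsum := (hp τ).mul_left (cuspParam h τ ^ k)⁻¹
    rw [Pi.mul_apply, Pi.pow_apply, inv_mul_cancel_left₀ (pow_ne_zero k (hq τ))] at hsum
    refine hsum.congr_fun fun n => ?_
    rw [zpow_add₀ (hq τ), _root_.zpow_neg, zpow_natCast, zpow_natCast, mul_smul_comm]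
  · rintro ⟨n₀, c, hc⟩
    refine ⟨(-n₀).toNat, PowerSeries.X ^ n₀.toNat * PowerSeries.mk c, ?_⟩
    have hmk : HasQExpansion h (fun τ => (cuspParam h τ ^ n₀)⁻¹ * f τ) (PowerSeries.mk c) := by
      intro τ
      refine ((hc τ).mul_left (cuspParam h τ ^ n₀)⁻¹).congr_fun fun n => ?_
      rw [PowerSeries.coeff_mk, zpow_add₀ (hq τ), mul_smul_comm,
        inv_mul_cancel_left₀ (zpow_ne_zero n₀ (hq τ)), zpow_natCast]
    convert (hasQExpansion_cuspParam_pow h n₀.toNat).mul hmk using 1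
    ext τ
    have hpow : cuspParam h τ ^ n₀.toNat = cuspParam h τ ^ (-n₀).toNat * cuspParam h τ ^ n₀ := by
      rw [← zpow_natCast, ← zpow_natCast, ← zpow_add₀ (hq τ)]
      congr 1
      omega
    simp only [Pi.mul_apply, Pi.pow_apply, hpow]
    rw [mul_assoc, mul_inv_cancel_left₀ (zpow_ne_zero n₀ (hq τ))]

lemma cuspParam_mem_laurentFunctions : cuspParam h ∈ laurentFunctions K h :=
  ⟨0, PowerSeries.X ^ 1, by simpa using hasQExpansion_cuspParam_pow h 1⟩

lemma inv_cuspParam_mem_laurentFunctions : (cuspParam h)⁻¹ ∈ laurentFunctions K h := by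
  refine ⟨1, PowerSeries.C 1, ?_⟩
  convert hasQExpansion_algebraMap h (1 : K) using 1
  ext τ
  simp [cuspParam_ne_zero]

lemma inv_mem_laurentFunctions (hh : 0 < h) (hf : f ∈ laurentFunctions K h)
    (hd : MDifferentiable 𝓘(ℂ) 𝓘(ℂ) f) (h0 : ∀ τ, f τ ≠ 0) : f⁻¹ ∈ laurentFunctions K h := by
  obtain ⟨k, p, hp⟩ := hf
  set u := (cuspParam h ^ p.order.toNat)⁻¹ * (cuspParam h ^ k * f) with hu
  have hq (n : ℕ) (τ : ℍ) : cuspParam h τ ^ n ≠ 0 := pow_ne_zero n (cuspParam_ne_zero h τ)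
  have hu0 (τ : ℍ) : u τ ≠ 0 := mul_ne_zero (inv_ne_zero (hq _ τ)) (mul_ne_zero (hq k τ) (h0 τ))
  have hfu : cuspParam h ^ p.order.toNat * u = cuspParam h ^ k * f := funext fun τ => by
    simp [hu, mul_inv_cancel_left₀ (hq _ τ)]
  have hp0 : p ≠ 0 := by
    rintro rfl
    exact mul_ne_zero (hq k UpperHalfPlane.I) (h0 _) ((hp UpperHalfPlane.I).unique (by simp))
  rw [← PowerSeries.X_pow_order_mul_divXPowOrder (f := p), ← hfu] at hp
  have hpow (n : ℕ) := (mdifferentiable_cuspParam h).pow n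
  have huinv := (HasQExpansion.of_X_pow_mul _ hp).inv hh
    (by rwa [Ne, PowerSeries.constantCoeff_divXPowOrder_eq_zero_iff])
    ((mdifferentiable_inv (hpow _) (hq _)).mul ((hpow k).mul hd)) hu0
  refine ⟨p.order.toNat, PowerSeries.X ^ k * p.divXPowOrder⁻¹, ?_⟩
  convert (hasQExpansion_cuspParam_pow h k).mul huinv using 1
  ext τ
  have := hq k τ
  have := h0 τ
  simp only [hu, Pi.mul_apply, Pi.pow_apply, Pi.inv_apply]
  field_simp

lemma exists_isBoundedAtImInfty_cuspParam_pow_mul (hh : 0 < h) (hf : f ∈ laurentFunctions K h) :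
    ∃ k : ℕ, IsBoundedAtImInfty (cuspParam h ^ k * f) :=
  hf.imp fun _ ⟨_, hp⟩ => hp.isBoundedAtImInfty hh

lemma hasQExpansion_of_isBoundedAtImInfty (hh : 0 < h) (hf : f ∈ laurentFunctions K h)
    (hb : IsBoundedAtImInfty f) : ∃ p : PowerSeries K, HasQExpansion h f p := by
  obtain ⟨k, p, hp⟩ := hf
  induction k generalizing p with
  | zero => exact ⟨p, by simpa using hp⟩
  | succ k ih =>
    have hq : IsBoundedAtImInfty (cuspParam h ^ k) :=
      (hasQExpansion_cuspParam_pow (K := K) h k).isBoundedAtImInfty hh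
    have hzero := (isZeroAtImInfty_cuspParam hh).mul_boundedAtFilter (hq.mul hb)
    rw [← mul_assoc, ← pow_succ'] at hzero
    have hp0 : p.constantCoeff = 0 := by
      simpa using tendsto_nhds_unique (hp.tendsto hh) hzero
    obtain ⟨r, rfl⟩ := PowerSeries.X_dvd_iff.mpr hp0
    exact ih r (.of_X_pow_mul 1 (by rwa [pow_one, pow_one, ← mul_assoc, ← pow_succ']))

lemma exists_tendsto_of_isBoundedAtImInfty (hh : 0 < h) (hf : f ∈ laurentFunctions K h)
    (hb : IsBoundedAtImInfty f) : ∃ c : K, Tendsto f atImInfty (𝓝 (algebraMap K ℂ c)) :=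
  (hasQExpansion_of_isBoundedAtImInfty hh hf hb).imp' PowerSeries.constantCoeff
    fun _ hp => hp.tendsto hh

lemma isBoundedAtImInfty_inv_cuspParam_mul (hh : 0 < h) (hf : f ∈ laurentFunctions K h)
    (hz : IsZeroAtImInfty f) : IsBoundedAtImInfty ((cuspParam h)⁻¹ * f) := by
  obtain ⟨p, hp⟩ := hasQExpansion_of_isBoundedAtImInfty hh hf hz.isBoundedAtImInfty
  have hp0 : p.constantCoeff = 0 := by
    simpa using tendsto_nhds_unique (hp.tendsto hh) hz
  obtain ⟨r, rfl⟩ := PowerSeries.X_dvd_iff.mpr hp0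
  refine HasQExpansion.isBoundedAtImInfty hh (.of_X_pow_mul 1 (p := r) ?_)
  convert hp using 1
  · ext τ
    simp [mul_inv_cancel_left₀ (cuspParam_ne_zero h τ)]
  · rw [pow_one]

lemma isBoundedAtImInfty_of_isZeroAtImInfty_cuspParam_mul (hh : 0 < h)
    (hf : f ∈ laurentFunctions K h) (hz : IsZeroAtImInfty (cuspParam h * f)) :
    IsBoundedAtImInfty f := by
  convert isBoundedAtImInfty_inv_cuspParam_mul hh (mul_mem cuspParam_mem_laurentFunctions hf) hz
    using 1
  ext τ
  simp [inv_mul_cancel_left₀ (cuspParam_ne_zero h τ)]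

lemma isBoundedAtImInfty_pow_mul {k : ℕ} {g : ℍ → ℂ}
    (hf : IsBoundedAtImInfty ((cuspParam h)⁻¹ * f))
    (hg : IsBoundedAtImInfty (cuspParam h ^ k * g)) : IsBoundedAtImInfty (f ^ k * g) := by
  have hpow : IsBoundedAtImInfty (((cuspParam h)⁻¹ * f) ^ k) :=
    pow_mem (S := boundedAtImInftySubalgebra ℂ) hf k
  refine (hpow.mul hg).congr_left fun τ => ?_
  have := cuspParam_ne_zero h τ
  simp only [Pi.mul_apply, Pi.pow_apply, Pi.inv_apply, mul_pow, inv_pow]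
  field_simp

lemma comp_vadd_mem_laurentFunctions (hf : f ∈ laurentFunctions ℂ h) (x : ℝ) :
    (fun τ => f (x +ᵥ τ)) ∈ laurentFunctions ℂ h := by
  obtain ⟨k, p, hp⟩ := hf
  set c := Function.Periodic.qParam h x with hcdef
  have hc : c ^ k ≠ 0 := pow_ne_zero k (Function.Periodic.qParam_ne_zero _)
  have hshift : HasQExpansion h (fun τ => (cuspParam h ^ k * f) (x +ᵥ τ)) (p.rescale c) := by
    intro τ
    refine (hp (x +ᵥ τ)).congr_fun fun n => ?_
    rw [PowerSeries.coeff_rescale, cuspParam_vadd, mul_pow, smul_eq_mul, smul_eq_mul]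
    ring
  refine ⟨k, PowerSeries.C (c ^ k)⁻¹ * p.rescale c, ?_⟩
  convert (hasQExpansion_algebraMap h (c ^ k)⁻¹).mul hshift using 1
  ext τ
  simp only [Pi.mul_apply, Pi.pow_apply, cuspParam_vadd, Pi.algebraMap_apply,
    Algebra.algebraMap_self, RingHom.id_apply, mul_pow, ← hcdef]
  field_simp

lemma mem_laurentFunctions_of_isBoundedAtImInfty (hh : 0 < h) (hper : ∀ τ, f (h +ᵥ τ) = f τ)
    (hd : MDifferentiable 𝓘(ℂ) 𝓘(ℂ) f) {k : ℕ} (hb : IsBoundedAtImInfty (cuspParam h ^ k * f)) :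
    f ∈ laurentFunctions ℂ h := by
  refine ⟨k, exists_hasQExpansion hh (fun τ => ?_)
    (((mdifferentiable_cuspParam h).pow k).mul hd) hb⟩
  rw [Pi.mul_apply, Pi.mul_apply, hper,
    (hasQExpansion_cuspParam_pow (K := ℂ) h k).vadd_eq hh.ne']

lemma isBoundedAtImInfty_inv_cuspParam_mul_of_periodic (hh : 0 < h)
    (hper : ∀ τ, f (h +ᵥ τ) = f τ) (hd : MDifferentiable 𝓘(ℂ) 𝓘(ℂ) f) (hz : IsZeroAtImInfty f) :
    IsBoundedAtImInfty ((cuspParam h)⁻¹ * f) :=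
  isBoundedAtImInfty_inv_cuspParam_mul hh (mem_laurentFunctions_of_isBoundedAtImInfty (k := 0) hh
    hper hd (by simpa using hz.isBoundedAtImInfty)) hz

end QExpansion

/-! ### Modular functions for `Γ₁(N)` -/

section ModularFunctions

open Filter Topology

variable {Γ : Subgroup SL(2, ℤ)} {N : ℕ} {f : ℍ → ℂ}

/-- The holomorphic functions on `ℍ` that are invariant under `Γ`, with no condition at the
cusps. -/
def holomorphicInvariants (Γ : Subgroup SL(2, ℤ)) : Subalgebra ℂ (ℍ → ℂ) where
  carrier := {f | MDifferentiable 𝓘(ℂ) 𝓘(ℂ) f ∧ ∀ γ ∈ Γ, ∀ τ : ℍ, f (γ • τ) = f τ}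
  mul_mem' hf hg := ⟨hf.1.mul hg.1, fun γ hγ τ => by
    simp only [Pi.mul_apply, hf.2 γ hγ, hg.2 γ hγ]⟩
  add_mem' hf hg := ⟨hf.1.add hg.1, fun γ hγ τ => by
    simp only [Pi.add_apply, hf.2 γ hγ, hg.2 γ hγ]⟩
  algebraMap_mem' _ := ⟨mdifferentiable_const, fun _ _ _ => rfl⟩

lemma inv_mem_holomorphicInvariants (hf : f ∈ holomorphicInvariants Γ) (h0 : ∀ τ, f τ ≠ 0) :
    f⁻¹ ∈ holomorphicInvariants Γ :=
  ⟨mdifferentiable_inv hf.1 h0, fun γ hγ τ => by simp only [Pi.inv_apply, hf.2 γ hγ]⟩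

lemma mdifferentiable_comp_smul (hf : MDifferentiable 𝓘(ℂ) 𝓘(ℂ) f) (γ : SL(2, ℤ)) :
    MDifferentiable 𝓘(ℂ) 𝓘(ℂ) (fun τ : ℍ => f (γ • τ)) :=
  hf.comp (UpperHalfPlane.mdifferentiable_smul (by simp))

lemma T_zpow_smul (j : ℤ) (τ : ℍ) : ModularGroup.T ^ j • τ = (j : ℝ) +ᵥ τ :=
  modular_T_zpow_smul τ j

lemma T_mem_Gamma1 (N : ℕ) : ModularGroup.T ∈ Gamma1 N := by
  rw [Gamma1_mem]
  simp [ModularGroup.coe_T]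

lemma conj_T_pow_mem_Gamma1 (N : ℕ) (γ : SL(2, ℤ)) :
    γ * ModularGroup.T ^ (N : ℤ) * γ⁻¹ ∈ Gamma1 N := by
  have hT := (Gamma_normal N).conj_mem _ (ModularGroup_T_pow_mem_Gamma N N dvd_rfl) γ
  rw [Gamma_mem] at hT
  exact (Gamma1_mem N _).mpr ⟨hT.1, hT.2.2.2, hT.2.2.1⟩

lemma vadd_one_apply (hf : f ∈ holomorphicInvariants (Gamma1 N)) (τ : ℍ) :
    f ((1 : ℝ) +ᵥ τ) = f τ := by
  rw [← modular_T_smul, hf.2 _ (T_mem_Gamma1 N)]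

lemma apply_smul_vadd (hf : f ∈ holomorphicInvariants (Gamma1 N)) (γ : SL(2, ℤ)) (τ : ℍ) :
    f (γ • ((N : ℝ) +ᵥ τ)) = f (γ • τ) := by
  rw [← hf.2 _ (conj_T_pow_mem_Gamma1 N γ) (γ • τ), smul_smul, inv_mul_cancel_right, mul_smul,
    T_zpow_smul, Int.cast_natCast]

lemma mem_laurentFunctions_comp_smul [NeZero N] (hf : f ∈ holomorphicInvariants (Gamma1 N))
    {γ : SL(2, ℤ)} {k : ℕ}
    (hb : IsBoundedAtImInfty (cuspParam N ^ k * fun τ => f (γ • τ))) :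
    (fun τ => f (γ • τ)) ∈ laurentFunctions ℂ N :=
  mem_laurentFunctions_of_isBoundedAtImInfty (Nat.cast_pos.mpr (NeZero.pos N))
    (apply_smul_vadd hf γ) (mdifferentiable_comp_smul hf.1 γ) hb

lemma isBoundedAtImInfty_inv_cuspParam_mul_comp_smul [NeZero N]
    (hf : f ∈ holomorphicInvariants (Gamma1 N)) {γ : SL(2, ℤ)}
    (hz : IsZeroAtImInfty fun τ => f (γ • τ)) :
    IsBoundedAtImInfty ((cuspParam N)⁻¹ * fun τ => f (γ • τ)) :=
  isBoundedAtImInfty_inv_cuspParam_mul_of_periodic (Nat.cast_pos.mpr (NeZero.pos N))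
    (apply_smul_vadd hf γ) (mdifferentiable_comp_smul hf.1 γ) hz

lemma exists_eq_const_of_isBoundedAtImInfty [NeZero N]
    (hf : f ∈ holomorphicInvariants (Gamma1 N))
    (hb : ∀ γ : SL(2, ℤ), IsBoundedAtImInfty fun τ => f (γ • τ)) :
    ∃ c, f = Function.const ℍ c := by
  let F : ModularForm ((Gamma1 N).map (Matrix.SpecialLinearGroup.mapGL ℝ)) 0 :=
    { toFun := f
      slash_action_eq' := by
        rintro _ ⟨γ, hγ, rfl⟩
        change SlashAction.map (0 : ℤ) γ f = f
        funext τ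
        rw [ModularForm.SL_slash_apply, hf.2 γ hγ]
        simp
      holo' := hf.1
      bdd_at_cusps' := by
        intro c hc
        rw [OnePoint.isBoundedAt_iff_forall_SL2Z
          (hc.mono (by rintro _ ⟨γ, _, rfl⟩; exact ⟨γ, rfl⟩))]
        exact fun γ _ => (hb γ).congr_left fun τ => by simp [ModularForm.SL_slash_apply] }
  exact ModularForm.eq_const_of_weight_zero F

/-- The ring of weakly holomorphic modular functions for `Γ₁(N)` with rational Fourier
coefficients: `IsWeaklyHolo1 N` in terms of Laurent expansions in the local parameters. -/
def weaklyHolomorphic (N : ℕ) : Subalgebra ℚ (ℍ → ℂ) where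
  carrier := {f | f ∈ holomorphicInvariants (Gamma1 N) ∧ f ∈ laurentFunctions ℚ 1 ∧
    ∀ γ : SL(2, ℤ), (fun τ => f (γ • τ)) ∈ laurentFunctions ℂ N}
  mul_mem' hf hg := ⟨mul_mem hf.1 hg.1, mul_mem hf.2.1 hg.2.1,
    fun γ => mul_mem (hf.2.2 γ) (hg.2.2 γ)⟩
  add_mem' hf hg := ⟨add_mem hf.1 hg.1, add_mem hf.2.1 hg.2.1,
    fun γ => add_mem (hf.2.2 γ) (hg.2.2 γ)⟩
  algebraMap_mem' c := ⟨algebraMap_mem _ (algebraMap ℚ ℂ c), algebraMap_mem _ c,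
    fun _ => algebraMap_mem _ (algebraMap ℚ ℂ c)⟩

lemma inv_mem_weaklyHolomorphic [NeZero N] (hf : f ∈ weaklyHolomorphic N)
    (h0 : ∀ τ, f τ ≠ 0) : f⁻¹ ∈ weaklyHolomorphic N :=
  ⟨inv_mem_holomorphicInvariants hf.1 h0, inv_mem_laurentFunctions one_pos hf.2.1 hf.1.1 h0,
    fun γ => inv_mem_laurentFunctions (Nat.cast_pos.mpr (NeZero.pos N)) (hf.2.2 γ)
      (mdifferentiable_comp_smul hf.1.1 γ) fun _ => h0 _⟩

lemma qpow_eq_cuspParam_zpow (N : ℕ) (n : ℤ) (τ : ℍ) : qpow N n τ = cuspParam N τ ^ n := by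
  rw [qpow, cuspParam, Function.Periodic.qParam, ← Complex.exp_int_mul]
  congr 1
  push_cast
  ring

lemma mem_weaklyHolomorphic_iff : f ∈ weaklyHolomorphic N ↔ IsWeaklyHolo1 N f := by
  have hℚ : f ∈ laurentFunctions ℚ 1 ↔ ∃ (n₀ : ℤ) (c : ℕ → ℚ),
      ∀ τ, HasSum (fun n : ℕ => (c n : ℂ) * qpow 1 (n₀ + n) τ) (f τ) := by
    simp only [mem_laurentFunctions_iff, Algebra.smul_def, eq_ratCast, qpow_eq_cuspParam_zpow,
      Nat.cast_one]
  have hℂ (γ : SL(2, ℤ)) : (fun τ => f (γ • τ)) ∈ laurentFunctions ℂ N ↔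
      ∃ (n₀ : ℤ) (c : ℕ → ℂ), ∀ τ, HasSum (fun n : ℕ => c n * qpow N (n₀ + n) τ) (f (γ • τ)) := by
    simp only [mem_laurentFunctions_iff, smul_eq_mul, qpow_eq_cuspParam_zpow]
  change (_ ∧ _) ∧ _ ∧ (∀ γ, _) ↔ _
  rw [IsWeaklyHolo1, and_assoc, ← hℚ, ← forall_congr' hℂ]

end ModularFunctions

/-! ### The cusps of `Γ₁(6)` -/

section Cusps

open Filter Topology

variable {N : ℕ} {f : ℍ → ℂ}

/-- The matrix `[[1, 0], [c, 1]]`, which moves the cusp `∞` to `1 / c` and is the identity for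
`c = 0`. -/
def lowerShear (c : ℤ) : SL(2, ℤ) := ⟨!![1, 0; c, 1], by simp⟩

lemma coe_lowerShear (c : ℤ) : (lowerShear c : Matrix (Fin 2) (Fin 2) ℤ) = !![1, 0; c, 1] := rfl

lemma lowerShear_zero : lowerShear 0 = 1 :=
  Subtype.ext (by simp [coe_lowerShear, Matrix.one_fin_two])

lemma lowerShear_neg (c : ℤ) : lowerShear (-c) = (lowerShear c)⁻¹ :=
  eq_inv_of_mul_eq_one_left (Subtype.ext (by simp [coe_lowerShear, Matrix.one_fin_two]))

lemma lowerShear_one_eq : lowerShear 1 = ModularGroup.T * (ModularGroup.S * ModularGroup.T) := by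
  ext i j
  fin_cases i <;> fin_cases j <;> rfl

lemma exists_mem_Gamma1_smul_eq {γ : SL(2, ℤ)} (h₁₀ : (γ 1 0 : ZMod N) = 0)
    (h₁₁ : (γ 1 1 : ZMod N) = 1 ∨ (γ 1 1 : ZMod N) = -1) :
    ∃ δ ∈ Gamma1 N, ∀ τ : ℍ, γ • τ = δ • τ := by
  have hdet : (γ 0 0 : ZMod N) * γ 1 1 - γ 0 1 * γ 1 0 = 1 := by
    exact_mod_cast congrArg (Int.cast : ℤ → ZMod N) ((Matrix.det_fin_two γ.1).symm.trans γ.2)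
  rw [h₁₀, mul_zero, sub_zero] at hdet
  rcases h₁₁ with h₁₁ | h₁₁ <;> rw [h₁₁] at hdet
  · exact ⟨γ, (Gamma1_mem N γ).mpr ⟨by simpa using hdet, h₁₁, h₁₀⟩, fun _ => rfl⟩
  · exact ⟨-γ, (Gamma1_mem N _).mpr ⟨by simpa using hdet, by simp [h₁₁], by simp [h₁₀]⟩,
      fun τ => (ModularGroup.SL_neg_smul γ τ).symm⟩

lemma exists_unimodular_reduction_zmod_six : ∀ c d : ZMod 6, (∃ a b, a * d - b * c = 1) →
    ∃ j : ZMod 6, ∃ k : Fin 4, c = (k.val : ZMod 6) * (d + c * j) ∧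
      (d + c * j = 1 ∨ d + c * j = -1) := by
  decide

/-- Every cusp of `Γ₁(6)` is equivalent to one of `∞ = 1 / 0`, `1`, `1 / 2` and `1 / 3`. -/
lemma exists_smul_eq_smul_lowerShear_smul_vadd (γ : SL(2, ℤ)) :
    ∃ δ ∈ Gamma1 6, ∃ k : Fin 4, ∃ j : ℤ, ∀ τ : ℍ,
      γ • τ = δ • lowerShear k.val • ((j : ℝ) +ᵥ τ) := by
  have hdet : (γ 0 0 : ZMod 6) * γ 1 1 - γ 0 1 * γ 1 0 = 1 := by
    exact_mod_cast congrArg (Int.cast : ℤ → ZMod 6) ((Matrix.det_fin_two γ.1).symm.trans γ.2)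
  obtain ⟨j', k, hc, hd⟩ := exists_unimodular_reduction_zmod_six _ _ ⟨_, _, hdet⟩
  obtain ⟨j, rfl⟩ := ZMod.intCast_surjective j'
  set γ' := γ * ModularGroup.T ^ j * lowerShear (-k.val) with hγ'
  have h₁₁ : γ' 1 1 = γ 1 1 + γ 1 0 * j := by
    simp only [Matrix.SpecialLinearGroup.coe_mul, ModularGroup.coe_T_zpow, coe_lowerShear,
      Matrix.mul_apply, Matrix.of_apply, Matrix.cons_val', Matrix.cons_val_fin_one,
      Fin.sum_univ_two, Matrix.cons_val_zero, Matrix.cons_val_one, mul_one, mul_zero, add_zero,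
      zero_add, Fin.isValue, γ']
    ring
  have h₁₀ : γ' 1 0 = γ 1 0 - k.val * (γ 1 1 + γ 1 0 * j) := by
    simp only [Matrix.SpecialLinearGroup.coe_mul, ModularGroup.coe_T_zpow, coe_lowerShear,
      Matrix.mul_apply, Matrix.of_apply, Matrix.cons_val', Matrix.cons_val_fin_one,
      Fin.sum_univ_two, Matrix.cons_val_zero, Matrix.cons_val_one, mul_one, mul_zero, add_zero,
      mul_neg, Fin.isValue, γ']
    ring
  obtain ⟨δ, hδ, h⟩ := exists_mem_Gamma1_smul_eq (N := 6) (γ := γ')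
    (by rw [h₁₀]; push_cast; exact sub_eq_zero.mpr hc) (by rw [h₁₁]; push_cast; exact hd)
  refine ⟨δ, hδ, k, -j, fun τ => ?_⟩
  rw [← h, ← T_zpow_smul, hγ', lowerShear_neg, smul_smul, smul_smul, inv_mul_cancel_right,
    mul_assoc, ← _root_.zpow_add, add_neg_cancel, zpow_zero, mul_one]

lemma comp_smul_induction {P : (ℍ → ℂ) → Prop} (hf : f ∈ holomorphicInvariants (Gamma1 6))
    (hP : ∀ {g : ℍ → ℂ} (x : ℝ), P g → P fun τ => g (x +ᵥ τ)) (h₀ : P f)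
    (h : ∀ c ∈ ({1, 2, 3} : Set ℤ), P fun τ => f (lowerShear c • τ)) (γ : SL(2, ℤ)) :
    P fun τ => f (γ • τ) := by
  obtain ⟨δ, hδ, k, j, hγ⟩ := exists_smul_eq_smul_lowerShear_smul_vadd γ
  simp only [hγ, hf.2 δ hδ]
  refine hP (g := fun τ => f (lowerShear k.val • τ)) j ?_
  fin_cases k
  · simpa only [lowerShear_zero, one_smul, Nat.cast_zero] using h₀
  all_goals exact h _ (by simp)

lemma tendsto_vadd_atImInfty (x : ℝ) : Tendsto (fun τ : ℍ => x +ᵥ τ) atImInfty atImInfty := by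
  simpa only [atImInfty, tendsto_comap_iff, Function.comp_def, vadd_im] using tendsto_comap

/-- The functions that are holomorphic on `ℍ`, invariant under `Γ₁(6)`, and bounded at all cusps
other than `∞`. -/
def regularOffInfty : Subalgebra ℂ (ℍ → ℂ) where
  carrier := {f | f ∈ holomorphicInvariants (Gamma1 6) ∧
    ∀ c ∈ ({1, 2, 3} : Set ℤ), IsBoundedAtImInfty fun τ => f (lowerShear c • τ)}
  mul_mem' hf hg := ⟨mul_mem hf.1 hg.1, fun c hc => (hf.2 c hc).mul (hg.2 c hc)⟩
  add_mem' hf hg := ⟨add_mem hf.1 hg.1, fun c hc => (hf.2 c hc).add (hg.2 c hc)⟩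
  algebraMap_mem' c := ⟨algebraMap_mem _ c, fun _ _ => const_boundedAtFilter _ c⟩

lemma exists_eq_const_of_mem_regularOffInfty (hf : f ∈ regularOffInfty)
    (hb : IsBoundedAtImInfty f) : ∃ c, f = Function.const ℍ c :=
  exists_eq_const_of_isBoundedAtImInfty hf.1 (comp_smul_induction hf.1
    (fun x hg => hg.comp_tendsto (tendsto_vadd_atImInfty x)) hb hf.2)

lemma comp_smul_mem_laurentFunctions (hf : f ∈ regularOffInfty)
    (h : f ∈ laurentFunctions ℂ 6) (γ : SL(2, ℤ)) :
    (fun τ => f (γ • τ)) ∈ laurentFunctions ℂ 6 :=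
  comp_smul_induction (P := (· ∈ laurentFunctions ℂ 6)) hf.1
    (fun x hg => comp_vadd_mem_laurentFunctions hg x) h
    (fun c hc => mem_laurentFunctions_comp_smul (N := 6) hf.1 (k := 0)
      (by simpa using! hf.2 c hc)) γ

end Cusps

/-! ### Quotients of Siegel functions at level `N` -/

section SiegelQuotient

open Filter Topology Matrix.SpecialLinearGroup

variable {N a b k : ℕ}

/-- The matrix `[[a, b], [0, d]]`, which acts on `ℍ` as `τ ↦ (aτ + b) / d`. -/
def upperTriangular (a b d : ℕ) [NeZero a] [NeZero d] : GL (Fin 2) ℝ :=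
  Matrix.GeneralLinearGroup.mkOfDetNeZero !![(a : ℝ), b; 0, d] (by simp [NeZero.ne])

lemma coe_upperTriangular (a b d : ℕ) [NeZero a] [NeZero d] :
    (upperTriangular a b d : Matrix (Fin 2) (Fin 2) ℝ) = !![(a : ℝ), b; 0, d] := rfl

lemma det_upperTriangular_pos (a b d : ℕ) [NeZero a] [NeZero d] :
    0 < (upperTriangular a b d).det.val := by
  simp [coe_upperTriangular, NeZero.pos]

lemma tendsto_upperTriangular_smul (a b d : ℕ) [NeZero a] [NeZero d] :
    Tendsto (fun τ : ℍ => upperTriangular a b d • τ) atImInfty atImInfty :=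
  tendsto_smul_atImInfty (by simp [coe_upperTriangular])

lemma coe_hsmul (N : ℕ) [NeZero N] (τ : ℍ) : (hsmul N τ : ℂ) = N * τ := by
  simp [hsmul, NeZero.pos]

lemma hsmul_eq_smul (N : ℕ) [NeZero N] (τ : ℍ) : hsmul N τ = upperTriangular N 0 1 • τ := by
  ext
  rw [coe_hsmul, coe_smul_of_det_pos (det_upperTriangular_pos N 0 1)]
  simp [num, denom, coe_upperTriangular]

lemma hsmul_smul [NeZero N] {γ δ : SL(2, ℤ)} (h₀₀ : δ 0 0 = γ 0 0) (h₀₁ : δ 0 1 = N * γ 0 1)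
    (h₁₀ : γ 1 0 = N * δ 1 0) (h₁₁ : δ 1 1 = γ 1 1) (τ : ℍ) :
    hsmul N (γ • τ) = δ • hsmul N τ := by
  rw [hsmul_eq_smul, hsmul_eq_smul]
  change upperTriangular N 0 1 • mapGL ℝ γ • τ = mapGL ℝ δ • upperTriangular N 0 1 • τ
  rw [smul_smul, smul_smul]
  congr 1
  ext i j
  fin_cases i <;> fin_cases j <;>
    simp [coe_upperTriangular, Matrix.mul_apply, Fin.sum_univ_two, h₀₀, h₀₁, h₁₀, h₁₁, mul_comm]

lemma exists_hsmul_smul [NeZero N] {γ : SL(2, ℤ)} (h : (γ 1 0 : ZMod N) = 0) :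
    ∃ δ : SL(2, ℤ), δ 0 0 = γ 0 0 ∧ δ 0 1 = N * γ 0 1 ∧ δ 1 1 = γ 1 1 ∧
      ∀ τ : ℍ, hsmul N (γ • τ) = δ • hsmul N τ := by
  obtain ⟨c, hc⟩ := (ZMod.intCast_zmod_eq_zero_iff_dvd (γ 1 0) N).mp h
  have hdet : γ 0 0 * γ 1 1 - γ 0 1 * γ 1 0 = 1 := (Matrix.det_fin_two γ.1).symm.trans γ.2
  let δ : SL(2, ℤ) := ⟨!![γ 0 0, N * γ 0 1; c, γ 1 1], by
    rw [Matrix.det_fin_two_of]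
    linear_combination hdet + γ 0 1 * hc⟩
  exact ⟨δ, rfl, rfl, rfl, hsmul_smul rfl rfl hc rfl⟩

lemma coe_T_zpow_mul_S (e : ℤ) :
    ((ModularGroup.T ^ e * ModularGroup.S : SL(2, ℤ)) : Matrix (Fin 2) (Fin 2) ℤ) =
      !![e, -1; 1, 0] := by
  rw [Matrix.SpecialLinearGroup.coe_mul, ModularGroup.coe_T_zpow, ModularGroup.coe_S]
  simp

lemma hsmul_lowerShear_smul (c e : ℕ) [NeZero c] [NeZero e] (τ : ℍ) :
    hsmul (c * e) (lowerShear c • τ) =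
      (ModularGroup.T ^ (e : ℤ) * ModularGroup.S) • upperTriangular c 1 e • τ := by
  have hδ := coe_T_zpow_mul_S e
  set δ := ModularGroup.T ^ (e : ℤ) * ModularGroup.S
  rw [hsmul_eq_smul]
  change upperTriangular (c * e) 0 1 • mapGL ℝ (lowerShear c) • τ =
    mapGL ℝ δ • upperTriangular c 1 e • τ
  rw [smul_smul, smul_smul]
  congr 1
  ext i j
  fin_cases i <;> fin_cases j <;>
    simp [coe_upperTriangular, Matrix.mul_apply, Fin.sum_univ_two, coe_lowerShear, hδ, mul_comm]

lemma mdifferentiable_hsmul (N : ℕ) [NeZero N] : MDifferentiable 𝓘(ℂ) 𝓘(ℂ) (hsmul N) := by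
  rw [funext (hsmul_eq_smul N)]
  exact UpperHalfPlane.mdifferentiable_smul (det_upperTriangular_pos N 0 1)

lemma hsmul_S_smul_hsmul (N : ℕ) [NeZero N] (τ : ℍ) :
    hsmul N (ModularGroup.S • hsmul N τ) = ModularGroup.S • τ := by
  have hN : (N : ℂ) ≠ 0 := NeZero.ne _
  ext
  simp only [coe_hsmul, modular_S_smul, inv_neg]
  field_simp

lemma hsmul_upperTriangular_one (N : ℕ) [NeZero N] (τ : ℍ) :
    hsmul N (upperTriangular 1 1 N • τ) = ModularGroup.T • τ := by
  ext
  have : (N : ℂ) ≠ 0 := NeZero.ne _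
  rw [modular_T_smul, coe_hsmul, coe_smul_of_det_pos (det_upperTriangular_pos 1 1 N)]
  simp only [num, denom, coe_upperTriangular, Matrix.of_apply, Matrix.cons_val',
    Matrix.cons_val_zero, Matrix.cons_val_one, Matrix.cons_val_fin_one, Nat.cast_one, ofReal_one,
    ofReal_zero, ofReal_natCast, one_mul, zero_mul, zero_add, coe_vadd]
  field_simp
  ring

lemma coe_S_mul_mul_S_inv (δ : SL(2, ℤ)) :
    ((ModularGroup.S * δ * ModularGroup.S⁻¹ : SL(2, ℤ)) : Matrix (Fin 2) (Fin 2) ℤ) =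
      !![δ 1 1, -δ 1 0; -δ 0 1, δ 0 0] := by
  rw [Matrix.SpecialLinearGroup.coe_mul, Matrix.SpecialLinearGroup.coe_mul,
    Matrix.SpecialLinearGroup.coe_inv, ModularGroup.coe_S, Matrix.adjugate_fin_two_of,
    Matrix.eta_fin_two δ.1]
  simp

/-- The Fricke involution `τ ↦ -1 / (Nτ)` normalises `Γ₁(N)`. -/
lemma comp_S_smul_hsmul_mem_holomorphicInvariants [NeZero N] {f : ℍ → ℂ}
    (hf : f ∈ holomorphicInvariants (Gamma1 N)) :
    (fun τ => f (ModularGroup.S • hsmul N τ)) ∈ holomorphicInvariants (Gamma1 N) := by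
  refine ⟨(mdifferentiable_comp_smul hf.1 _).comp (mdifferentiable_hsmul N), fun γ hγ τ => ?_⟩
  obtain ⟨h₀₀, h₁₁, h₁₀⟩ := (Gamma1_mem N γ).mp hγ
  obtain ⟨δ, hδ₀₀, hδ₀₁, hδ₁₁, hδ⟩ := exists_hsmul_smul h₁₀
  have hconj : ModularGroup.S * δ * ModularGroup.S⁻¹ ∈ Gamma1 N := by
    rw [Gamma1_mem, coe_S_mul_mul_S_inv]
    simp [hδ₀₀, hδ₀₁, hδ₁₁, h₀₀, h₁₁]
  change f (ModularGroup.S • hsmul N (γ • τ)) = f (ModularGroup.S • hsmul N τ)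
  rw [hδ, ← hf.2 _ hconj (ModularGroup.S • hsmul N τ), smul_smul, smul_smul, inv_mul_cancel_right]

lemma tendsto_hsmul (N : ℕ) [NeZero N] : Tendsto (hsmul N) atImInfty atImInfty := by
  rw [funext (hsmul_eq_smul N)]
  exact tendsto_upperTriangular_smul N 0 1

lemma cuspParam_hsmul (N : ℕ) [NeZero N] (τ : ℍ) : cuspParam N (hsmul N τ) = cuspParam 1 τ := by
  have : (N : ℂ) ≠ 0 := NeZero.ne _
  simp only [cuspParam, Function.Periodic.qParam, coe_hsmul]
  congr 1
  push_cast
  field_simp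

/-- The function `(g_{(a/N,0)} / g_{(b/N,0)}) (Nτ) ^ k`. -/
def siegelQuotient (N a b k : ℕ) : ℍ → ℂ := fun τ =>
  siegelRatio (a / N, 0) (b / N, 0) (hsmul N τ) ^ k

lemma nonIntegral_div_zero [NeZero N] (ha : ¬ N ∣ a) : NonIntegral (a / N, 0) := by
  rintro ⟨m, n, h⟩
  have hN : (N : ℚ) ≠ 0 := NeZero.ne _
  have h1 : (a : ℚ) / N = m := congrArg Prod.fst h
  rw [div_eq_iff hN] at h1
  have : (a : ℤ) = m * N := by exact_mod_cast h1
  exact ha (Int.natCast_dvd_natCast.mp ⟨m, by rw [this, mul_comm]⟩)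

lemma siegelQuotient_ne_zero [NeZero N] (ha : ¬ N ∣ a) (hb : ¬ N ∣ b) (τ : ℍ) :
    siegelQuotient N a b k τ ≠ 0 :=
  pow_ne_zero _ (siegelRatio_ne_zero (nonIntegral_div_zero ha) (nonIntegral_div_zero hb) _)

lemma mdifferentiable_siegelQuotient [NeZero N] (hb : ¬ N ∣ b) :
    MDifferentiable 𝓘(ℂ) 𝓘(ℂ) (siegelQuotient N a b k) :=
  ((mdifferentiable_siegelRatio _ (nonIntegral_div_zero hb)).comp (mdifferentiable_hsmul N)).pow k

lemma siegelQuotient_smul [NeZero N] (h₁ : (2 : ℤ) ∣ k * (a - b))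
    (h₂ : (2 * N : ℤ) ∣ k * (a ^ 2 - b ^ 2)) {γ : SL(2, ℤ)} (hγ : γ ∈ Gamma1 N) (τ : ℍ) :
    siegelQuotient N a b k (γ • τ) = siegelQuotient N a b k τ := by
  obtain ⟨h₀₀, -, h₁₀⟩ := (Gamma1_mem N γ).mp hγ
  obtain ⟨m, hm⟩ := (ZMod.intCast_eq_intCast_iff_dvd_sub 1 (γ 0 0) N).mp (by simpa using h₀₀.symm)
  obtain ⟨δ, hδ₀₀, hδ₀₁, -, hδ⟩ := exists_hsmul_smul h₁₀
  obtain ⟨s, hs⟩ := h₁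
  obtain ⟨t, ht⟩ := h₂
  have hN : (N : ℚ) ≠ 0 := NeZero.ne _
  have hact (n : ℕ) : tAct δ (n / N, 0) = ((n / N + (n * m : ℤ), 0 + (n * γ 0 1 : ℤ)) : ℚ × ℚ) := by
    have : (γ 0 0 : ℚ) = 1 + N * m := by exact_mod_cast eq_add_of_sub_eq' hm
    ext <;> simp only [tAct, hδ₀₀, hδ₀₁, this] <;> push_cast <;> field_simp <;> ring
  rw [siegelQuotient, siegelQuotient, hδ, siegelRatio_smul, hact, hact, siegelRatio_add_int,
    mul_pow, ← Complex.exp_nat_mul, (Complex.exp_eq_one_iff).mpr ⟨?_, ?_⟩, one_mul]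
  · exact s * (m + γ 0 1) + t * γ 0 1 - N * t * m * γ 0 1
  · have hN' : (N : ℂ) ≠ 0 := NeZero.ne _
    have hs' : (k * (a - b) : ℂ) = 2 * s := by exact_mod_cast hs
    have ht' : (k * (a ^ 2 - b ^ 2) : ℂ) = 2 * N * t := by exact_mod_cast ht
    push_cast
    field_simp
    linear_combination N * (m + γ 0 1) * hs' + (γ 0 1 - N * m * γ 0 1) * ht'

/-- The theta series `∑ (-1)^j q^(N j (j - 1) / 2 + a j)`. -/
def levelTheta (N a : ℕ) : ℍ → ℂ := fun τ => shiftedTheta (a * τ) (hsmul N τ)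

/-- The exponent `N j (j - 1) / 2 + a j` of the theta series `levelTheta N a`. -/
def levelThetaExponent (N a : ℕ) (j : ℤ) : ℤ := N * (j * (j - 1) / 2) + a * j

lemma two_mul_levelThetaExponent (N a : ℕ) (j : ℤ) :
    2 * levelThetaExponent N a j = N * (j * (j - 1)) + 2 * (a * j) := by
  obtain ⟨m, hm⟩ := Int.even_mul_pred_self j
  rw [levelThetaExponent, hm, ← two_mul, Int.mul_ediv_cancel_left m two_ne_zero]
  ring

lemma abs_le_levelThetaExponent (ha : 0 < a) (haN : a < N) (j : ℤ) :
    |j| ≤ levelThetaExponent N a j := by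
  have h := two_mul_levelThetaExponent N a j
  have : (1 : ℤ) ≤ a := by exact_mod_cast ha
  have : (a : ℤ) + 1 ≤ N := by exact_mod_cast haN
  rcases abs_cases j with ⟨hj, h0⟩ | ⟨hj, h0⟩ <;> rw [hj]
  · have : 0 ≤ j * (j - 1) := by
      rcases h0.eq_or_lt with rfl | h0
      · simp
      · exact mul_nonneg h0.le (by omega)
    nlinarith
  · nlinarith [mul_nonneg_of_nonpos_of_nonpos (by omega : j ≤ 0) (by omega : j + 1 ≤ 0)]

lemma exp_mul_exp_eq_cuspParam_pow [NeZero N] (ha : 0 < a) (haN : a < N) (τ : ℍ) (j : ℤ) :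
    cexp (π * Complex.I * hsmul N τ) ^ (j * (j - 1)) * cexp (2 * π * Complex.I * (a * τ)) ^ j =
      cuspParam 1 τ ^ (levelThetaExponent N a j).toNat := by
  have hexponent :
      ((levelThetaExponent N a j).toNat : ℂ) * 2 = N * (j * (j - 1)) + 2 * (a * j) := by
    rw [mul_comm]
    exact_mod_cast (congrArg (2 * ·) (Int.toNat_of_nonneg
      ((abs_nonneg j).trans (abs_le_levelThetaExponent ha haN j)))).trans
        (two_mul_levelThetaExponent N a j)
  rw [cuspParam, Function.Periodic.qParam, ← Complex.exp_int_mul, ← Complex.exp_int_mul,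
    ← Complex.exp_nat_mul, ← Complex.exp_add, coe_hsmul]
  congr 1
  push_cast
  linear_combination (-(π * Complex.I * τ)) * hexponent

lemma levelTheta_mem_laurentFunctions (ha : 0 < a) (haN : a < N) :
    levelTheta N a ∈ laurentFunctions ℚ 1 := by
  have : NeZero N := ⟨by omega⟩
  have hfinite (n : ℕ) : ((fun j => (levelThetaExponent N a j).toNat) ⁻¹' {n}).Finite := by
    refine (Set.finite_Icc (-(n : ℤ)) n).subset fun j hj => abs_le.mp ?_
    have := abs_le_levelThetaExponent ha haN j
    rw [Set.mem_preimage, Set.mem_singleton_iff] at hj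
    omega
  obtain ⟨p, hp⟩ := exists_hasQExpansion_of_hasSum (fun j : ℤ => ((-1) ^ j : ℚ)) hfinite
    (h := 1) (f := levelTheta N a) fun τ =>
      (hasSum_shiftedTheta (a * τ) (hsmul N τ)).congr_fun fun j => by
        rw [mul_assoc, exp_mul_exp_eq_cuspParam_pow ha haN, Algebra.smul_def]
        simp
  exact ⟨0, p, by simpa using hp⟩

lemma cuspParam_zpow_mem_laurentFunctions {K : Type*} [Field K] [Algebra K ℂ] {h : ℝ} (n : ℤ) :
    cuspParam h ^ n ∈ laurentFunctions K h := by
  obtain ⟨n, rfl | rfl⟩ := n.eq_nat_or_neg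
  · exact zpow_natCast (cuspParam h) n ▸ pow_mem cuspParam_mem_laurentFunctions n
  · rw [_root_.zpow_neg, zpow_natCast, ← inv_pow]
    exact pow_mem inv_cuspParam_mem_laurentFunctions n

lemma siegelTheta_hsmul [NeZero N] (a : ℕ) (τ : ℍ) :
    siegelTheta (a / N, 0) (hsmul N τ) =
      cexp (π * Complex.I * ((a ^ 2 / N - a) * τ)) * levelTheta N a τ := by
  have : (N : ℂ) ≠ 0 := NeZero.ne _
  rw [siegelTheta, levelTheta, coe_hsmul]
  congr 2 <;> push_cast <;> field_simp <;> ring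

lemma levelTheta_ne_zero [NeZero N] (ha : ¬ N ∣ a) (τ : ℍ) : levelTheta N a τ ≠ 0 := by
  have := siegelTheta_ne_zero (nonIntegral_div_zero ha) (hsmul N τ)
  rw [siegelTheta_hsmul] at this
  exact right_ne_zero_of_mul this

lemma mdifferentiable_levelTheta [NeZero N] (a : ℕ) :
    MDifferentiable 𝓘(ℂ) 𝓘(ℂ) (levelTheta N a) := by
  have hlevel : levelTheta N a = (fun τ : ℍ => cexp (-(π * Complex.I * ((a ^ 2 / N - a) * τ)))) *
      (siegelTheta (a / N, 0) ∘ hsmul N) := funext fun τ => by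
    rw [Pi.mul_apply, Function.comp_apply, siegelTheta_hsmul, ← mul_assoc, ← Complex.exp_add,
      neg_add_cancel, Complex.exp_zero, one_mul]
  have hexp : Differentiable ℂ fun z : ℂ => cexp (-(π * Complex.I * ((a ^ 2 / N - a) * z))) := by
    fun_prop
  rw [hlevel]
  exact (hexp.mdifferentiable.comp mdifferentiable_coe).mul
    ((mdifferentiable_siegelTheta _).comp (mdifferentiable_hsmul N))

lemma siegelQuotient_mem_laurentFunctions (h₁ : (2 : ℤ) ∣ k * (a - b))
    (h₂ : (2 * N : ℤ) ∣ k * (a ^ 2 - b ^ 2)) (ha : 0 < a) (haN : a < N) (hb : 0 < b)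
    (hbN : b < N) : siegelQuotient N a b k ∈ laurentFunctions ℚ 1 := by
  have : NeZero N := ⟨by omega⟩
  obtain ⟨s, hs⟩ := h₁
  obtain ⟨t, ht⟩ := h₂
  have hinv : (levelTheta N b)⁻¹ ∈ laurentFunctions ℚ 1 :=
    inv_mem_laurentFunctions one_pos (levelTheta_mem_laurentFunctions hb hbN)
      (mdifferentiable_levelTheta b) (levelTheta_ne_zero (Nat.not_dvd_of_pos_of_lt hb hbN))
  convert mul_mem (cuspParam_zpow_mem_laurentFunctions (K := ℚ) (h := 1) (t - s))
    (pow_mem (mul_mem (levelTheta_mem_laurentFunctions ha haN) hinv) k) using 1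
  ext τ
  have hexp : (cexp (π * Complex.I * ((a ^ 2 / N - a) * τ)) /
      cexp (π * Complex.I * ((b ^ 2 / N - b) * τ))) ^ k = cuspParam 1 τ ^ (t - s) := by
    have hN : (N : ℂ) ≠ 0 := NeZero.ne _
    have hs' : (k * (a - b) : ℂ) = 2 * s := by exact_mod_cast hs
    have ht' : (k * (a ^ 2 - b ^ 2) : ℂ) = 2 * N * t := by exact_mod_cast ht
    rw [cuspParam, Function.Periodic.qParam, ← Complex.exp_sub, ← Complex.exp_int_mul,
      ← Complex.exp_nat_mul]
    congr 1
    push_cast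
    field_simp
    linear_combination τ * (ht' - N * hs')
  rw [siegelQuotient, siegelRatio_eq_siegelTheta_div, siegelTheta_hsmul, siegelTheta_hsmul,
    mul_div_mul_comm, mul_pow, hexp, div_eq_mul_inv (levelTheta N a τ)]
  rfl

lemma tendsto_cuspParam_mul_siegelRatio_pow [NeZero N] {r s : ℚ × ℚ} (hs : NonIntegral s)
    (h : N * k * (siegelOrder r.1 - siegelOrder s.1) = -2) :
    Tendsto (fun τ => cuspParam N τ * siegelRatio r s τ ^ k) atImInfty
      (𝓝 ((siegelLeadingCoeff r / siegelLeadingCoeff s) ^ k)) := by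
  refine ((tendsto_exp_mul_siegelRatio hs).pow k).congr fun τ => ?_
  have hN : (N : ℂ) ≠ 0 := NeZero.ne _
  have h' : (N * k * (siegelOrder r.1 - siegelOrder s.1) : ℂ) = -2 := by exact_mod_cast h
  rw [mul_pow, ← Complex.exp_nat_mul, cuspParam, Function.Periodic.qParam]
  congr 2
  push_cast
  field_simp
  linear_combination -τ * h'

lemma tendsto_cuspParam_mul_siegelQuotient (ha : 0 < a) (haN : a < N) (hb : 0 < b) (hbN : b < N)
    (h : (N * k * (siegelOrder (a / N) - siegelOrder (b / N)) : ℚ) = -2) :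
    Tendsto (cuspParam 1 * siegelQuotient N a b k) atImInfty (𝓝 1) := by
  have : NeZero N := ⟨by omega⟩
  have hmem {n : ℕ} (hn : 0 < n) (hnN : n < N) : (n / N : ℚ) ∈ Set.Ioo (0 : ℚ) 1 :=
    have hN : (0 : ℚ) < N := by exact_mod_cast hn.trans hnN
    ⟨div_pos (by exact_mod_cast hn) hN, (div_lt_one hN).mpr (by exact_mod_cast hnN)⟩
  have hlim := (tendsto_cuspParam_mul_siegelRatio_pow (r := (a / N, 0))
    (nonIntegral_div_zero (Nat.not_dvd_of_pos_of_lt hb hbN)) h).comp (tendsto_hsmul N)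
  rw [siegelLeadingCoeff_of_mem_Ioo (hmem ha haN), siegelLeadingCoeff_of_mem_Ioo (hmem hb hbN),
    Rat.cast_zero, zero_mul, zero_mul, mul_zero, Complex.exp_zero, div_one, one_pow] at hlim
  exact hlim.congr fun τ => by rw [Function.comp_apply, cuspParam_hsmul]; rfl

lemma nonIntegral_neg_div [NeZero N] (hb : ¬ N ∣ b) (u : ℚ) : NonIntegral (u, -(b / N)) := by
  rintro ⟨m, n, h⟩
  exact nonIntegral_div_zero hb ⟨-n, 0, Prod.ext (by simpa using congrArg (-·.2) h) (by simp)⟩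

variable {c e : ℕ} [NeZero c] [NeZero e]

lemma siegelQuotient_lowerShear_smul (hN : N = c * e) (τ : ℍ) :
    siegelQuotient N a b k (lowerShear c • τ) =
      siegelRatio (a / c, -(a / N)) (b / c, -(b / N)) (upperTriangular c 1 e • τ) ^ k := by
  subst hN
  have hact (n : ℕ) : tAct (ModularGroup.T ^ (e : ℤ) * ModularGroup.S)
      (n / (c * e : ℕ), 0) = ((n / c, -(n / (c * e : ℕ))) : ℚ × ℚ) := by
    have : (c : ℚ) ≠ 0 := NeZero.ne _
    have : (e : ℚ) ≠ 0 := NeZero.ne _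
    simp only [tAct, coe_T_zpow_mul_S]
    ext
    · simp only [Matrix.of_apply, Matrix.cons_val', Matrix.cons_val_zero, Matrix.cons_val_one,
        Matrix.cons_val_fin_one, Int.cast_natCast, Nat.cast_mul, mul_zero, add_zero]
      field_simp
    · simp
  rw [siegelQuotient, hsmul_lowerShear_smul, siegelRatio_smul, hact, hact]

lemma tendsto_siegelQuotient_lowerShear_smul (hN : N = c * e) (hb : ¬ N ∣ b)
    (h : siegelOrder (a / c) = siegelOrder (b / c)) :
    Tendsto (fun τ => siegelQuotient N a b k (lowerShear c • τ)) atImInfty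
      (𝓝 ((siegelLeadingCoeff (a / c, -(a / N)) / siegelLeadingCoeff (b / c, -(b / N))) ^ k)) := by
  have : NeZero N := ⟨by rw [hN]; exact NeZero.ne _⟩
  simp only [siegelQuotient_lowerShear_smul hN]
  exact ((tendsto_siegelRatio (nonIntegral_neg_div hb _) h).comp
    (tendsto_upperTriangular_smul c 1 e)).pow k

lemma isZeroAtImInfty_siegelQuotient_lowerShear_smul (hN : N = c * e) (hb : ¬ N ∣ b) (hk : k ≠ 0)
    (h : siegelOrder (b / c) < siegelOrder (a / c)) :
    IsZeroAtImInfty fun τ => siegelQuotient N a b k (lowerShear c • τ) := by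
  have : NeZero N := ⟨by rw [hN]; exact NeZero.ne _⟩
  simp only [siegelQuotient_lowerShear_smul hN]
  have hzero : Tendsto (siegelRatio (a / c, -(a / N)) (b / c, -(b / N))) atImInfty (𝓝 0) :=
    isZeroAtImInfty_siegelRatio (nonIntegral_neg_div hb _) h
  have hlim := (hzero.comp (tendsto_upperTriangular_smul c 1 e)).pow k
  rwa [zero_pow hk] at hlim

end SiegelQuotient

/-! ### The Hauptmodul `g_{1,6}` and its values at the cusps -/

section Hauptmodul

open Filter Topology

lemma gOne6_eq_siegelQuotient : gOne6 = siegelQuotient 6 3 1 3 := funext fun τ => by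
  simp [gOne6, siegelQuotient, siegelRatio, mul_pow, div_eq_mul_inv]

lemma gOne6_ne_zero (τ : ℍ) : gOne6 τ ≠ 0 :=
  gOne6_eq_siegelQuotient ▸ siegelQuotient_ne_zero (by norm_num) (by norm_num) τ

lemma gOne6_mem_holomorphicInvariants : gOne6 ∈ holomorphicInvariants (Gamma1 6) := by
  rw [gOne6_eq_siegelQuotient]
  exact ⟨mdifferentiable_siegelQuotient (by norm_num),
    fun γ hγ => siegelQuotient_smul (by norm_num) (by norm_num) hγ⟩

lemma gOne6_mem_laurentFunctions : gOne6 ∈ laurentFunctions ℚ 1 := by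
  rw [gOne6_eq_siegelQuotient]
  apply siegelQuotient_mem_laurentFunctions <;> norm_num

lemma tendsto_cuspParam_mul_gOne6 : Tendsto (cuspParam 1 * gOne6) atImInfty (𝓝 1) := by
  rw [gOne6_eq_siegelQuotient]
  apply tendsto_cuspParam_mul_siegelQuotient <;> norm_num [siegelOrder]

/-- The image of `g_{1,6}` under the Fricke involution `τ ↦ -1 / (6τ)`. -/
def frickeGOne6 : ℍ → ℂ := fun τ => gOne6 (ModularGroup.S • hsmul 6 τ)

lemma frickeGOne6_eq_siegelRatio_pow (τ : ℍ) :
    frickeGOne6 τ = siegelRatio (0, -(1 / 2)) (0, -(1 / 6)) τ ^ 3 := by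
  rw [frickeGOne6, gOne6_eq_siegelQuotient, siegelQuotient, hsmul_S_smul_hsmul, siegelRatio_smul]
  norm_num [tAct, ModularGroup.S]

lemma frickeGOne6_lowerShear_smul (c : ℤ) (τ : ℍ) : frickeGOne6 (lowerShear c • τ) =
    siegelRatio (-(c / 2), -(1 / 2)) (-(c / 6), -(1 / 6)) τ ^ 3 := by
  rw [frickeGOne6_eq_siegelRatio_pow, siegelRatio_smul]
  simp [tAct, coe_lowerShear, div_eq_mul_inv]

lemma frickeGOne6_mem_holomorphicInvariants : frickeGOne6 ∈ holomorphicInvariants (Gamma1 6) :=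
  comp_S_smul_hsmul_mem_holomorphicInvariants gOne6_mem_holomorphicInvariants

lemma tendsto_frickeGOne6 : Tendsto frickeGOne6 atImInfty (𝓝 8) := by
  have hlim := (tendsto_siegelRatio (r := (0, -(1 / 2))) (s := (0, -(1 / 6)))
    (nonIntegral_neg_div (N := 6) (b := 1) (by norm_num) 0) rfl).pow 3
  have h₂ : Complex.sin (π * (-(1 / 2) : ℚ)) = -1 := by
    rw [← Complex.sin_pi_div_two, ← Complex.sin_neg]
    congr 1
    push_cast
    ring
  have h₆ : Complex.sin (π * (-(1 / 6) : ℚ)) = -(1 / 2) := by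
    rw [show (π * (-(1 / 6) : ℚ) : ℂ) = -((π / 6 : ℝ) : ℂ) by push_cast; ring, Complex.sin_neg,
      ← Complex.ofReal_sin, Real.sin_pi_div_six]
    norm_num
  rw [siegelLeadingCoeff_zero_left, siegelLeadingCoeff_zero_left, h₂, h₆] at hlim
  rw [funext frickeGOne6_eq_siegelRatio_pow]
  convert hlim using 2
  field_simp [Complex.I_ne_zero]
  norm_num

lemma gOne6_lowerShear_one_smul (τ : ℍ) :
    gOne6 (lowerShear 1 • τ) = frickeGOne6 (upperTriangular 1 1 6 • τ) := by
  rw [frickeGOne6, hsmul_upperTriangular_one, lowerShear_one_eq, mul_smul, mul_smul,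
    gOne6_mem_holomorphicInvariants.2 _ (T_mem_Gamma1 6)]

lemma tendsto_gOne6_lowerShear_one :
    Tendsto (fun τ => gOne6 (lowerShear 1 • τ)) atImInfty (𝓝 8) := by
  simp only [gOne6_lowerShear_one_smul]
  exact tendsto_frickeGOne6.comp (tendsto_upperTriangular_smul 1 1 6)

lemma isZeroAtImInfty_gOne6_lowerShear_three :
    IsZeroAtImInfty fun τ => gOne6 (lowerShear 3 • τ) := by
  rw [gOne6_eq_siegelQuotient]
  exact isZeroAtImInfty_siegelQuotient_lowerShear_smul (c := 3) (e := 2) rfl (by norm_num)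
    (by norm_num) (by norm_num [siegelOrder])

/-- The function `(g_{(2/6,0)} / g_{(1/6,0)}) (6τ) ^ 4`. It has the same pole as `g_{1,6}` and
vanishes only at the cusp `1 / 2`. -/
def companionUnit : ℍ → ℂ := siegelQuotient 6 2 1 4

lemma gOne6_mem_regularOffInfty : gOne6 ∈ regularOffInfty := by
  refine ⟨gOne6_mem_holomorphicInvariants, ?_⟩
  rintro c (rfl | rfl | rfl)
  · exact tendsto_gOne6_lowerShear_one.isBigO_one ℝ
  · rw [gOne6_eq_siegelQuotient]
    exact (tendsto_siegelQuotient_lowerShear_smul (c := 2) (e := 3) rfl (by norm_num)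
      (by norm_num [siegelOrder])).isBigO_one ℝ
  · exact isZeroAtImInfty_gOne6_lowerShear_three.isBoundedAtImInfty

lemma isZeroAtImInfty_companionUnit_lowerShear_two :
    IsZeroAtImInfty fun τ => companionUnit (lowerShear 2 • τ) :=
  isZeroAtImInfty_siegelQuotient_lowerShear_smul (c := 2) (e := 3) rfl (by norm_num)
    (by norm_num) (by norm_num [siegelOrder])

lemma tendsto_companionUnit_lowerShear_three :
    Tendsto (fun τ => companionUnit (lowerShear 3 • τ)) atImInfty (𝓝 1) := by
  have hlim := tendsto_siegelQuotient_lowerShear_smul (N := 6) (a := 2) (b := 1) (k := 4) (c := 3)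
    (e := 2) rfl (by norm_num) (by norm_num [siegelOrder])
  have hlead : (siegelLeadingCoeff ((2 : ℕ) / (3 : ℕ), -((2 : ℕ) / (6 : ℕ))) /
      siegelLeadingCoeff ((1 : ℕ) / (3 : ℕ), -((1 : ℕ) / (6 : ℕ)))) ^ 4 = 1 := by
    rw [siegelLeadingCoeff_of_mem_Ioo (by norm_num), siegelLeadingCoeff_of_mem_Ioo (by norm_num),
      ← Complex.exp_sub, ← Complex.exp_nat_mul]
    norm_num
  rwa [hlead] at hlim

lemma companionUnit_mem_regularOffInfty : companionUnit ∈ regularOffInfty := by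
  refine ⟨⟨mdifferentiable_siegelQuotient (by norm_num),
    fun γ hγ => siegelQuotient_smul (by norm_num) (by norm_num) hγ⟩, ?_⟩
  rintro c (rfl | rfl | rfl)
  · exact (tendsto_siegelQuotient_lowerShear_smul (c := 1) (e := 6) rfl (by norm_num)
      (by norm_num [siegelOrder])).isBigO_one ℝ
  · exact isZeroAtImInfty_companionUnit_lowerShear_two.isBoundedAtImInfty
  · exact tendsto_companionUnit_lowerShear_three.isBigO_one ℝ

lemma companionUnit_mem_laurentFunctions : companionUnit ∈ laurentFunctions ℚ 1 := by
  apply siegelQuotient_mem_laurentFunctions <;> norm_num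

lemma tendsto_cuspParam_mul_companionUnit :
    Tendsto (cuspParam 1 * companionUnit) atImInfty (𝓝 1) := by
  apply tendsto_cuspParam_mul_siegelQuotient <;> norm_num [siegelOrder]

theorem companionUnit_eq_gOne6_add_one : companionUnit = gOne6 + 1 := by
  have hlim : Tendsto (cuspParam 1 * (companionUnit - gOne6)) atImInfty (𝓝 0) := by
    rw [mul_sub]
    simpa using! tendsto_cuspParam_mul_companionUnit.sub tendsto_cuspParam_mul_gOne6
  obtain ⟨c, hc⟩ := exists_eq_const_of_mem_regularOffInfty
    (sub_mem companionUnit_mem_regularOffInfty gOne6_mem_regularOffInfty)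
    (isBoundedAtImInfty_of_isZeroAtImInfty_cuspParam_mul one_pos
      (sub_mem companionUnit_mem_laurentFunctions gOne6_mem_laurentFunctions) hlim)
  have hzero : Tendsto (fun τ => gOne6 (lowerShear 3 • τ)) atImInfty (𝓝 0) :=
    isZeroAtImInfty_gOne6_lowerShear_three
  have hvalue := tendsto_companionUnit_lowerShear_three.sub hzero
  have hc' (τ : ℍ) : companionUnit τ - gOne6 τ = c := congrFun hc τ
  simp only [hc', sub_zero] at hvalue
  obtain rfl : c = 1 := tendsto_nhds_unique tendsto_const_nhds hvalue
  exact eq_add_of_sub_eq' hc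

lemma gOne6_add_one_ne_zero (τ : ℍ) : gOne6 τ + 1 ≠ 0 := by
  have h := siegelQuotient_ne_zero (N := 6) (a := 2) (b := 1) (k := 4) (by norm_num)
    (by norm_num) τ
  rwa [← companionUnit, companionUnit_eq_gOne6_add_one] at h

lemma isZeroAtImInfty_gOne6_add_one_lowerShear_two :
    IsZeroAtImInfty fun τ => gOne6 (lowerShear 2 • τ) + 1 := by
  have h := isZeroAtImInfty_companionUnit_lowerShear_two
  rwa [companionUnit_eq_gOne6_add_one] at h

lemma isZeroAtImInfty_gOne6_sub_eight_lowerShear_one :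
    IsZeroAtImInfty fun τ => gOne6 (lowerShear 1 • τ) - 8 := by
  simpa using! tendsto_gOne6_lowerShear_one.sub_const 8

lemma isBoundedAtImInfty_inv_cuspParam_mul_gOne6_sub_eight : IsBoundedAtImInfty
    ((cuspParam 6)⁻¹ * fun τ => gOne6 (lowerShear 1 • τ) - 8) :=
  isBoundedAtImInfty_inv_cuspParam_mul_comp_smul (N := 6)
    (sub_mem gOne6_mem_holomorphicInvariants (algebraMap_mem _ 8))
    isZeroAtImInfty_gOne6_sub_eight_lowerShear_one

lemma isZeroAtImInfty_frickeGOne6_lowerShear_two :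
    IsZeroAtImInfty fun τ => frickeGOne6 (lowerShear 2 • τ) := by
  have hs : NonIntegral (-((2 : ℤ) / 6), -(1 / 6)) :=
    nonIntegral_neg_div (N := 6) (b := 1) (by norm_num) _
  have hzero : Tendsto (siegelRatio (-((2 : ℤ) / 2), -(1 / 2)) (-((2 : ℤ) / 6), -(1 / 6)))
      atImInfty (𝓝 0) := isZeroAtImInfty_siegelRatio hs (by norm_num [siegelOrder])
  simp only [frickeGOne6_lowerShear_smul]
  simpa using! hzero.pow 3

lemma isBoundedAtImInfty_frickeGOne6_lowerShear_three :
    IsBoundedAtImInfty fun τ => frickeGOne6 (lowerShear 3 • τ) := by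
  simp only [frickeGOne6_lowerShear_smul]
  exact ((tendsto_siegelRatio (nonIntegral_neg_div (N := 6) (b := 1) (by norm_num) _)
    (by norm_num [siegelOrder])).pow 3).isBigO_one ℝ

lemma isBoundedAtImInfty_cuspParam_mul_frickeGOne6_lowerShear_one :
    IsBoundedAtImInfty (cuspParam 6 * fun τ => frickeGOne6 (lowerShear 1 • τ)) := by
  simp only [frickeGOne6_lowerShear_smul]
  exact (tendsto_cuspParam_mul_siegelRatio_pow (N := 6) (k := 3)
    (nonIntegral_neg_div (N := 6) (b := 1) (by norm_num) _)
    (by norm_num [siegelOrder])).isBigO_one ℝ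

lemma isBoundedAtImInfty_gOne6_sub_mul_frickeGOne6_sub :
    IsBoundedAtImInfty ((gOne6 - 8) * (frickeGOne6 - 8)) := by
  have hw : IsZeroAtImInfty (frickeGOne6 - 8) := by
    simpa using! tendsto_frickeGOne6.sub_const 8
  have hw' := isBoundedAtImInfty_inv_cuspParam_mul_of_periodic one_pos
    (vadd_one_apply (sub_mem frickeGOne6_mem_holomorphicInvariants (ofNat_mem _ 8)))
    (frickeGOne6_mem_holomorphicInvariants.1.sub mdifferentiable_const) hw
  have hg : IsBoundedAtImInfty (cuspParam 1 ^ 1 * (gOne6 - 8)) := by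
    rw [pow_one, mul_sub]
    exact (tendsto_cuspParam_mul_gOne6.sub ((isZeroAtImInfty_cuspParam one_pos).mul_const 8)
      ).isBigO_one ℝ
  rw [mul_comm]
  simpa only [pow_one] using! isBoundedAtImInfty_pow_mul hw' hg

lemma gOne6_sub_mul_frickeGOne6_sub_mem_regularOffInfty :
    (gOne6 - 8) * (frickeGOne6 - 8) ∈ regularOffInfty := by
  refine ⟨mul_mem (sub_mem gOne6_mem_holomorphicInvariants (ofNat_mem _ 8))
    (sub_mem frickeGOne6_mem_holomorphicInvariants (ofNat_mem _ 8)), ?_⟩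
  have hg := (sub_mem gOne6_mem_regularOffInfty (ofNat_mem regularOffInfty 8)).2
  have hconst : IsBoundedAtImInfty (8 : ℍ → ℂ) := const_boundedAtFilter atImInfty 8
  rintro c (rfl | rfl | rfl)
  · have hw : IsBoundedAtImInfty
        (cuspParam 6 ^ 1 * ((fun τ => frickeGOne6 (lowerShear 1 • τ)) - 8)) := by
      rw [pow_one, mul_sub]
      exact isBoundedAtImInfty_cuspParam_mul_frickeGOne6_lowerShear_one.sub
        ((isZeroAtImInfty_cuspParam (by simp)).isBoundedAtImInfty.mul hconst)
    simpa using! isBoundedAtImInfty_pow_mul isBoundedAtImInfty_inv_cuspParam_mul_gOne6_sub_eight hw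
  · exact BoundedAtFilter.mul (hg 2 (by simp))
      (isZeroAtImInfty_frickeGOne6_lowerShear_two.isBoundedAtImInfty.sub hconst)
  · exact BoundedAtFilter.mul (hg 3 (by simp))
      (isBoundedAtImInfty_frickeGOne6_lowerShear_three.sub hconst)

theorem gOne6_sub_mul_frickeGOne6_sub (τ : ℍ) : (gOne6 τ - 8) * (frickeGOne6 τ - 8) = 72 := by
  obtain ⟨c, hc⟩ := exists_eq_const_of_mem_regularOffInfty
    gOne6_sub_mul_frickeGOne6_sub_mem_regularOffInfty
    isBoundedAtImInfty_gOne6_sub_mul_frickeGOne6_sub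
  have hg : Tendsto (fun τ => gOne6 (lowerShear 2 • τ) + 1) atImInfty (𝓝 0) :=
    isZeroAtImInfty_gOne6_add_one_lowerShear_two
  have hw : Tendsto (fun τ => frickeGOne6 (lowerShear 2 • τ)) atImInfty (𝓝 0) :=
    isZeroAtImInfty_frickeGOne6_lowerShear_two
  have hlim := (hg.sub_const 9).mul (hw.sub_const 8)
  have hc' (τ : ℍ) : (gOne6 τ + 1 - 9) * (frickeGOne6 τ - 8) = c := by
    rw [← show ((gOne6 - 8) * (frickeGOne6 - 8)) τ = c from congrFun hc τ]
    simp only [Pi.mul_apply, Pi.sub_apply, Pi.ofNat_apply]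
    ring
  simp only [hc'] at hlim
  obtain rfl := tendsto_nhds_unique tendsto_const_nhds hlim
  linear_combination hc' τ

lemma gOne6_sub_eight_ne_zero (τ : ℍ) : gOne6 τ - 8 ≠ 0 :=
  left_ne_zero_of_mul (b := frickeGOne6 τ - 8) (by norm_num [gOne6_sub_mul_frickeGOne6_sub])

lemma gOne6_mem_weaklyHolomorphic : gOne6 ∈ weaklyHolomorphic 6 := by
  refine ⟨gOne6_mem_holomorphicInvariants, gOne6_mem_laurentFunctions,
    comp_smul_mem_laurentFunctions gOne6_mem_regularOffInfty ?_⟩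
  simpa only [one_smul] using! mem_laurentFunctions_comp_smul (N := 6) (k := 6) (γ := 1)
    gOne6_mem_holomorphicInvariants (by
      simpa only [cuspParam_natCast_pow 6, one_smul] using!
        tendsto_cuspParam_mul_gOne6.isBigO_one ℝ)

/-- The generators `g_{1,6}`, `g_{1,6}⁻¹`, `(g_{1,6} - 8)⁻¹` and `(g_{1,6} + 1)⁻¹`. -/
def gOne6Generators : Fin 4 → ℍ → ℂ := ![gOne6, gOne6⁻¹, (gOne6 - 8)⁻¹, (gOne6 + 1)⁻¹]

lemma gOne6Generators_mem_weaklyHolomorphic (i : Fin 4) :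
    gOne6Generators i ∈ weaklyHolomorphic 6 := by
  have hg := gOne6_mem_weaklyHolomorphic
  fin_cases i
  · exact hg
  · exact inv_mem_weaklyHolomorphic hg gOne6_ne_zero
  · exact inv_mem_weaklyHolomorphic (sub_mem hg (ofNat_mem _ 8)) gOne6_sub_eight_ne_zero
  · exact inv_mem_weaklyHolomorphic (add_mem hg (one_mem _)) gOne6_add_one_ne_zero

lemma exists_tendsto_cuspParam_pow_mul {f : ℍ → ℂ} (hf : f ∈ laurentFunctions ℚ 1) {k : ℕ}
    (hb : IsBoundedAtImInfty (cuspParam 1 ^ k * f)) :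
    ∃ c : ℚ, Tendsto (cuspParam 1 ^ k * f) atImInfty (𝓝 c) := by
  simpa using exists_tendsto_of_isBoundedAtImInfty one_pos
    (mul_mem (pow_mem cuspParam_mem_laurentFunctions k) hf) hb

lemma mem_adjoin_gOne6_of_isBoundedAtImInfty {f : ℍ → ℂ} (hf : f ∈ regularOffInfty)
    (hf' : f ∈ laurentFunctions ℚ 1) {k : ℕ} (hb : IsBoundedAtImInfty (cuspParam 1 ^ k * f)) :
    f ∈ Algebra.adjoin ℚ {gOne6} := by
  have hg : gOne6 ∈ Algebra.adjoin ℚ {gOne6} := Algebra.self_mem_adjoin_singleton _ _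
  induction k generalizing f with
  | zero =>
    rw [pow_zero, one_mul] at hb
    obtain ⟨c, rfl⟩ := exists_eq_const_of_mem_regularOffInfty hf hb
    obtain ⟨r, hr⟩ := exists_tendsto_of_isBoundedAtImInfty one_pos hf' hb
    obtain rfl := tendsto_nhds_unique tendsto_const_nhds hr
    exact algebraMap_mem _ r
  | succ k ih =>
    obtain ⟨c, hc⟩ := exists_tendsto_cuspParam_pow_mul hf' hb
    set m : ℍ → ℂ := algebraMap ℚ (ℍ → ℂ) c * gOne6 ^ (k + 1) with hm
    have hmem : f - m ∈ laurentFunctions ℚ 1 :=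
      sub_mem hf' (mul_mem (algebraMap_mem _ c) (pow_mem gOne6_mem_laurentFunctions _))
    have hlim : Tendsto (cuspParam 1 * (cuspParam 1 ^ k * (f - m))) atImInfty (𝓝 0) := by
      have h := hc.sub ((tendsto_cuspParam_mul_gOne6.pow (k + 1)).const_mul (c : ℂ))
      rw [one_pow, mul_one, sub_self] at h
      refine h.congr fun τ => ?_
      simp only [hm, Pi.mul_apply, Pi.sub_apply, Pi.pow_apply, Pi.algebraMap_apply, eq_ratCast]
      ring
    have hlower := ih
      (sub_mem hf (mul_mem (algebraMap_mem _ (c : ℂ)) (pow_mem gOne6_mem_regularOffInfty _)))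
      hmem (isBoundedAtImInfty_of_isZeroAtImInfty_cuspParam_mul one_pos
        (mul_mem (pow_mem cuspParam_mem_laurentFunctions k) hmem) hlim)
    rw [← sub_add_cancel f m]
    exact add_mem hlower (mul_mem (algebraMap_mem _ c) (pow_mem hg _))

lemma mem_adjoin_gOne6 {f : ℍ → ℂ} (hf : f ∈ regularOffInfty)
    (hf' : f ∈ laurentFunctions ℚ 1) : f ∈ Algebra.adjoin ℚ {gOne6} := by
  obtain ⟨k, hk⟩ := exists_isBoundedAtImInfty_cuspParam_pow_mul one_pos hf'
  exact mem_adjoin_gOne6_of_isBoundedAtImInfty hf hf' hk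

lemma exists_pow_mul_mem_regularOffInfty {f : ℍ → ℂ} (hf : f ∈ weaklyHolomorphic 6) :
    ∃ k l m : ℕ, (gOne6 - 8) ^ k * (gOne6 + 1) ^ l * gOne6 ^ m * f ∈ regularOffInfty := by
  obtain ⟨k, hk⟩ := exists_isBoundedAtImInfty_cuspParam_pow_mul (by simp) (hf.2.2 (lowerShear 1))
  obtain ⟨l, hl⟩ := exists_isBoundedAtImInfty_cuspParam_pow_mul (by simp) (hf.2.2 (lowerShear 2))
  obtain ⟨m, hm⟩ := exists_isBoundedAtImInfty_cuspParam_pow_mul (by simp) (hf.2.2 (lowerShear 3))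
  have hg := gOne6_mem_regularOffInfty
  have h₈ : gOne6 - 8 ∈ regularOffInfty := sub_mem hg (ofNat_mem _ 8)
  have h₁ : gOne6 + 1 ∈ regularOffInfty := add_mem hg (one_mem _)
  refine ⟨k, l, m, mul_mem (mul_mem (mul_mem (pow_mem h₈.1 k) (pow_mem h₁.1 l)) (pow_mem hg.1 m))
    hf.1, ?_⟩
  rintro c (rfl | rfl | rfl)
  · refine (((mul_mem (pow_mem h₁ l) (pow_mem hg m)).2 1 (by simp)).mul
      (isBoundedAtImInfty_pow_mul (isBoundedAtImInfty_inv_cuspParam_mul_comp_smul h₈.1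
        isZeroAtImInfty_gOne6_sub_eight_lowerShear_one) hk)).congr_left fun τ => ?_
    simp only [Pi.mul_apply, Pi.pow_apply, Pi.sub_apply, Pi.add_apply]
    ring
  · refine (((mul_mem (pow_mem h₈ k) (pow_mem hg m)).2 2 (by simp)).mul
      (isBoundedAtImInfty_pow_mul (isBoundedAtImInfty_inv_cuspParam_mul_comp_smul h₁.1
        isZeroAtImInfty_gOne6_add_one_lowerShear_two) hl)).congr_left fun τ => ?_
    simp only [Pi.mul_apply, Pi.pow_apply, Pi.sub_apply, Pi.add_apply]
    ring
  · refine (((mul_mem (pow_mem h₈ k) (pow_mem h₁ l)).2 3 (by simp)).mul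
      (isBoundedAtImInfty_pow_mul (isBoundedAtImInfty_inv_cuspParam_mul_comp_smul hg.1
        isZeroAtImInfty_gOne6_lowerShear_three) hm)).congr_left fun τ => ?_
    simp only [Pi.mul_apply, Pi.pow_apply, Pi.sub_apply, Pi.add_apply]
    ring

theorem weaklyHolomorphic_six_eq_adjoin :
    weaklyHolomorphic 6 = Algebra.adjoin ℚ (Set.range gOne6Generators) := by
  refine le_antisymm (fun f hf => ?_)
    (Algebra.adjoin_le (Set.range_subset_iff.mpr gOne6Generators_mem_weaklyHolomorphic))
  have hgen (i : Fin 4) : gOne6Generators i ∈ Algebra.adjoin ℚ (Set.range gOne6Generators) :=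
    Algebra.subset_adjoin (Set.mem_range_self i)
  obtain ⟨k, l, m, hklm⟩ := exists_pow_mul_mem_regularOffInfty hf
  set F := (gOne6 - 8) ^ k * (gOne6 + 1) ^ l * gOne6 ^ m * f with hF
  have hg := gOne6_mem_laurentFunctions
  have hFlaurent : F ∈ laurentFunctions ℚ 1 := mul_mem (mul_mem (mul_mem
    (pow_mem (sub_mem hg (ofNat_mem _ 8)) k) (pow_mem (add_mem hg (one_mem _)) l))
    (pow_mem hg m)) hf.2.1
  have hFmem : F ∈ Algebra.adjoin ℚ (Set.range gOne6Generators) :=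
    Algebra.adjoin_mono (Set.singleton_subset_iff.mpr (Set.mem_range_self 0))
      (mem_adjoin_gOne6 hklm hFlaurent)
  have hfF : f = F * (gOne6Generators 1 ^ m * gOne6Generators 2 ^ k * gOne6Generators 3 ^ l) := by
    ext τ
    have := gOne6_ne_zero τ
    have := gOne6_sub_eight_ne_zero τ
    have := gOne6_add_one_ne_zero τ
    simp only [hF, gOne6Generators, Fin.isValue, Matrix.cons_val_one, Matrix.cons_val_zero,
      inv_pow, Matrix.cons_val, Pi.mul_apply, Pi.pow_apply, Pi.sub_apply, Pi.ofNat_apply,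
      Pi.add_apply, Pi.inv_apply]
    field_simp
  rw [hfF]
  exact mul_mem hFmem (mul_mem (mul_mem (pow_mem (hgen 1) m) (pow_mem (hgen 2) k))
    (pow_mem (hgen 3) l))

end Hauptmodul

/-- `O_{1,6}(ℚ) = ℚ[g_{1,6}, g_{1,6}⁻¹, (g_{1,6} - 8)⁻¹, (g_{1,6} + 1)⁻¹]`. -/
theorem statement16 :
    IsWeaklyHolo1 6 gOne6 ∧
    IsWeaklyHolo1 6 (fun τ => (gOne6 τ)⁻¹) ∧
    IsWeaklyHolo1 6 (fun τ => (gOne6 τ - 8)⁻¹) ∧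
    IsWeaklyHolo1 6 (fun τ => (gOne6 τ + 1)⁻¹) ∧
    (∀ h : ℍ → ℂ, IsWeaklyHolo1 6 h →
      ∃ P : MvPolynomial (Fin 4) ℚ, ∀ τ : ℍ,
        h τ = MvPolynomial.aeval
          ![gOne6 τ, (gOne6 τ)⁻¹, (gOne6 τ - 8)⁻¹, (gOne6 τ + 1)⁻¹] P) := by
  have hgen (i : Fin 4) : IsWeaklyHolo1 6 (gOne6Generators i) :=
    mem_weaklyHolomorphic_iff.mp (gOne6Generators_mem_weaklyHolomorphic i)
  refine ⟨hgen 0, hgen 1, hgen 2, hgen 3, fun h hh => ?_⟩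
  rw [← mem_weaklyHolomorphic_iff, weaklyHolomorphic_six_eq_adjoin,
    Algebra.adjoin_range_eq_range_aeval] at hh
  obtain ⟨P, rfl⟩ := hh
  refine ⟨P, fun τ => ?_⟩
  have heval := MvPolynomial.comp_aeval_apply gOne6Generators (Pi.evalAlgHom ℚ (fun _ => ℂ) τ) P
  refine heval.trans ?_
  congr 2
  ext i
  fin_cases i <;> rfl
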